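/- arXiv:2002.03512 — 12 statements merged into one kernel-verified Lean document; each statement's English description precedes it below -/
import Mathlib

section
/- Let A be a ring with a nonzero divisor ϖ such that ϖ lies in the Jacobson radical of A and A is integral over a Noetherian subring. Let g ∈ A be a nonzero divisor. For each integer j > 0 let A[ϖ^j/g] denote the A-subalgebra of A[1/(ϖg)] generated by ϖ^j/g, and set A^{j∘} := {x ∈ A[1/(ϖg)] : ∃ m ≥ 0 such that ϖ^m x^n ∈ A[ϖ^j/g] for all n ≥ 0}. Then the integral closure of A in A[1/(ϖg)] is equal to the intersection ⋂_{j>0} A^{j∘} inside A[1/(ϖg)]. -/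
theorem exV {K : Type*} [Field K] (T : Subring K) (P : Ideal T) [P.IsPrime] :
    ∃ V : ValuationSubring K, T ≤ V.toSubring ∧ (∀ t : T, t ∈ P → V.valuation t < 1) ∧
      (∀ t : T, t ∉ P → V.valuation t = 1) := by
  obtain ⟨V, hV, hloc⟩ := (LocalSubring.ofPrime T P).exists_le_valuationSubring
  have hle := (LocalSubring.le_ofPrime T P).trans hV
  refine ⟨V, hle, fun t ht => ?_, fun t ht => ?_⟩
  · have h1 : (V.valuation t : _) ≤ 1 := (V.valuation_le_one_iff _).2 (hle t.2)
    refine lt_of_le_of_ne h1 fun h => ?_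
    have hu : IsUnit (⟨t, hle t.2⟩ : V) := (V.valuation_eq_one_iff _).2 h
    have hu2 : IsUnit (algebraMap T (LocalSubring.ofPrime T P).toSubring t) :=
      hloc.1 _ hu
    exact (IsLocalization.AtPrime.isUnit_to_map_iff _ P t).1 hu2 ht
  · have hu2 : IsUnit (algebraMap T (LocalSubring.ofPrime T P).toSubring t) :=
      (IsLocalization.AtPrime.isUnit_to_map_iff _ P t).2 ht
    have hu : IsUnit (⟨t, hle t.2⟩ : V) := hu2.map (Subring.inclusion hV)
    exact (V.valuation_eq_one_iff _).1 hu

theorem radQ {T : Type*} [CommRing T] [IsDomain T] (Q : Ideal T) [Q.IsPrime] (hQ : Q.height ≤ 1)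
    (a c : T) (ha : a ∈ Q) (hc : c ≠ 0) : ∃ s, s ∉ Q ∧ ∃ k : ℕ, ∃ e, s * a ^ k = c * e := by
  by_contra! H
  have hd : Disjoint ((Ideal.span {c} : Ideal T) : Set T) (Q.primeCompl ⊔ Submonoid.powers a : Submonoid T) := by
    rw [Set.disjoint_left]
    intro z hz hz'
    obtain ⟨e, rfl⟩ := Ideal.mem_span_singleton'.1 hz
    obtain ⟨s, hs, _, ⟨k, rfl⟩, h⟩ := Submonoid.mem_sup.1 hz'
    exact H s hs k e (by rw [mul_comm c]; exact h)
  obtain ⟨p, hp, hcp, hpd⟩ := Ideal.exists_le_prime_disjoint _ _ hd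
  rw [Set.disjoint_left] at hpd
  have hlt : p < Q := by
    refine lt_of_le_of_ne (fun z hz => by_contra fun hzQ => hpd hz ?_) ?_
    · exact (le_sup_left : Q.primeCompl ≤ _) hzQ
    · rintro rfl
      exact hpd ha ((le_sup_right : Submonoid.powers a ≤ _) ⟨1, by simp⟩)
  have h0 : p.height < 1 := (Ideal.height_le_iff (n := 1)).1 (by exact_mod_cast hQ) p hp hlt
  have hb : (⊥ : Ideal T).IsPrime := Ideal.isPrime_bot
  have hp0 : p.height ≤ 0 := by
    have := Order.lt_one_iff.1 h0
    exact this.le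
  have hcp' : c ∈ p := hcp (Ideal.mem_span_singleton_self c)
  have hbp : (⊥ : Ideal T) < p := bot_lt_iff_ne_bot.2 (by rintro rfl; exact hc (by simpa using hcp'))
  have := (Ideal.height_le_iff (n := 0) (p := p)).1 (by exact_mod_cast hp0) ⊥ hb hbp
  simp at this

theorem core1 {K : Type*} [Field K] (T : Subring K) [IsNoetherianRing T] (a b : K) 
    (ha : a ∈ T) (hb : b ∈ T) (ha0 : a ≠ 0)
    (V₀ : ValuationSubring K) (hT : T ≤ V₀.toSubring) (hva : V₀.valuation a < 1)
    (hba : V₀.valuation b ≤ V₀.valuation a) :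
    ∃ V : ValuationSubring K, T ≤ V.toSubring ∧ V.valuation a < 1 ∧ V.valuation b < 1 ∧
      ∀ c ∈ T, c ≠ 0 → (∃ k : ℕ, V.valuation a ^ k ≤ V.valuation c) ∧
        (∃ k : ℕ, V.valuation b ^ k ≤ V.valuation c) := by
  let S := Algebra.adjoin T {b / a}
  have hSn : IsNoetherianRing S := by
    have : Algebra.FiniteType T S := (Subalgebra.fg_iff_finiteType S).1 ⟨{b / a}, by simp [S]⟩
    exact Algebra.FiniteType.isNoetherianRing T S
  let S' : Subring K := S.toSubring
  have : IsNoetherianRing S' := hSn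
  have hTS : T ≤ S' := fun t ht => S.algebraMap_mem ⟨t, ht⟩
  have hSV : S' ≤ V₀.toSubring := by
    intro z hz
    have hz : z ∈ S := hz
    induction hz using Algebra.adjoin_induction with
    | mem x hx => 
      rw [Set.mem_singleton_iff.1 hx]
      refine (V₀.valuation_le_one_iff _).1 ?_
      rw [map_div₀]
      exact div_le_one_of_le₀ hba zero_le
    | algebraMap r => exact hT r.2
    | add x y _ _ h1 h2 => exact add_mem (h1 ‹_›) (h2 ‹_›)
    | mul x y _ _ h1 h2 => exact mul_mem (h1 ‹_›) (h2 ‹_›)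
  let a' : S' := ⟨a, hTS ha⟩
  have hne : Ideal.span {a'} ≠ ⊤ := by
    intro h
    rw [Ideal.span_singleton_eq_top] at h
    have : IsUnit (⟨a, hT ha⟩ : V₀) := h.map (Subring.inclusion hSV)
    exact hva.ne ((V₀.valuation_eq_one_iff _).1 this)
  obtain ⟨Q, hQ⟩ := Ideal.nonempty_minimalPrimes hne
  have := hQ.isPrime
  have hht := Ideal.height_le_one_of_isPrincipal_of_mem_minimalPrimes (Ideal.span {a'}) Q hQ
  have haQ : a' ∈ Q := hQ.1.2 (Ideal.mem_span_singleton_self _)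
  let b' : S' := ⟨b, hTS hb⟩
  have hbQ : b' ∈ Q := by
    have : b' = a' * ⟨b / a, Algebra.self_mem_adjoin_singleton _ _⟩ := by
      ext; simp [a', b', mul_div_cancel₀, ha0]
    rw [this]; exact Q.mul_mem_right _ haQ
  obtain ⟨V, hV, hV1, hV2⟩ := exV S' Q
  have key : ∀ d : S', d ∈ Q → ∀ c ∈ T, c ≠ 0 → ∃ k : ℕ, V.valuation (d : K) ^ k ≤ V.valuation c := by
    intro d hd c hc hc0
    obtain ⟨s, hs, k, e, h⟩ := radQ Q hht d ⟨c, hTS hc⟩ hd (by simpa [Subtype.ext_iff] using hc0)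
    refine ⟨k, ?_⟩
    have h' : (s : K) * d ^ k = c * e := by simpa using congrArg Subtype.val h
    have h2 := congrArg V.valuation h'
    rw [map_mul, map_mul, hV2 s hs, one_mul, map_pow] at h2
    rw [h2]
    exact mul_le_of_le_one_right' ((V.valuation_le_one_iff _).2 (hV e.2))
  exact ⟨V, hTS.trans hV, hV1 _ haQ, hV1 _ hbQ, fun c hc hc0 => 
    ⟨key a' haQ c hc hc0, key b' hbQ c hc hc0⟩⟩

theorem core2 {K : Type*} [Field K] (T : Subring K) [IsNoetherianRing T] (a b : K)
    (ha : a ∈ T) (hb : b ∈ T) (ha0 : a ≠ 0) (hb0 : b ≠ 0)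
    (V₀ : ValuationSubring K) (hT : T ≤ V₀.toSubring) (hva : V₀.valuation a < 1)
    (hvb : V₀.valuation b < 1) :
    ∃ V : ValuationSubring K, T ≤ V.toSubring ∧ V.valuation a < 1 ∧ V.valuation b < 1 ∧
      ∀ c ∈ T, c ≠ 0 → (∃ k : ℕ, V.valuation a ^ k ≤ V.valuation c) ∧
        (∃ k : ℕ, V.valuation b ^ k ≤ V.valuation c) := by
  rcases le_total (V₀.valuation b) (V₀.valuation a) with h | h
  · exact core1 T a b ha hb ha0 V₀ hT hva h
  · obtain ⟨V, h1, h2, h3, h4⟩ := core1 T b a hb ha hb0 V₀ hT hvb h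
    exact ⟨V, h1, h3, h2, fun c hc hc0 => (h4 c hc hc0).symm⟩

theorem exVsub {A K : Type*} [CommRing A] [Field K] [Algebra A K] (B : Subalgebra A K)
    (I : Ideal B) (hI : I ≠ ⊤) :
    ∃ V : ValuationSubring K, (∀ b : B, (b : K) ∈ V) ∧ ∀ b ∈ I, V.valuation (b : K) < 1 := by
  obtain ⟨M, hM, hIM⟩ := I.exists_le_maximal hI
  have hMp : M.IsPrime := hM.isPrime
  obtain ⟨V, h1, h2, -⟩ := @exV K _ B.toSubring M hMp
  exact ⟨V, fun b => h1 b.2, fun b hb => h2 b (hIM hb)⟩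

theorem jacI {A : Type*} [CommRing A] [Nontrivial A] (ϖ : A)
    (hZar : ϖ ∈ (⊥ : Ideal A).jacobson) : Ideal.span {ϖ} ≠ ⊤ := by
  rw [Ideal.mem_jacobson_bot] at hZar
  intro h
  obtain ⟨u, hu⟩ := (Ideal.span_singleton_eq_top.1 h).exists_right_inv
  have := hZar (-u)
  rw [mul_neg, hu] at this
  simp at this

theorem jacInt {A K : Type*} [CommRing A] [CommRing K] [Algebra A K] (ϖ : A)
    (hZar : ϖ ∈ (⊥ : Ideal A).jacobson) (x : K) (p : Polynomial A)
    (hp : p.leadingCoeff - 1 ∈ Ideal.span {ϖ}) (hpx : Polynomial.aeval x p = 0) :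
    IsIntegral A x := by
  rw [Ideal.mem_jacobson_bot] at hZar
  obtain ⟨c, hc⟩ := Ideal.mem_span_singleton'.1 hp
  have H : IsUnit (ϖ * c + 1) := hZar c
  have e : ϖ * c + 1 = p.leadingCoeff := by linear_combination hc
  rw [e] at H
  obtain ⟨u, hu⟩ := H.exists_left_inv
  have hm : (Polynomial.C u * p).Monic :=
    Polynomial.monic_C_mul_of_mul_leadingCoeff_eq_one hu
  have h0 : Polynomial.aeval x (Polynomial.C u * p) = 0 := by
    rw [map_mul, hpx, mul_zero]
  exact ⟨Polynomial.C u * p, hm, h0⟩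

theorem exNe {A K : Type*} [CommRing A] [Field K] [Algebra A K] (ϖ : A)
    (hZar : ϖ ∈ (⊥ : Ideal A).jacobson) (y : K) [Invertible y] (hx : ¬ IsIntegral A (⅟ y)) :
    (Ideal.span {ϖ}).map (algebraMap A (Algebra.adjoin A {y})) ⊔
      .span {⟨y, Algebra.self_mem_adjoin_singleton A y⟩} ≠ ⊤ := by
  have hntA : Nontrivial A := (algebraMap A K).domain_nontrivial
  have hI := jacI ϖ hZar
  intro eq
  obtain ⟨p, hp, hpx⟩ :=
    Algebra.exists_aeval_invOf_eq_zero_of_idealMap_adjoin_sup_span_eq_top _ _ hI eq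
  exact hx (jacInt ϖ hZar _ p hp hpx)

theorem exV0 {A K : Type*} [CommRing A] [Field K] [Algebra A K] (ϖ : A)
    (hZar : ϖ ∈ (⊥ : Ideal A).jacobson) (x : K) (hx : ¬ IsIntegral A x) :
    ∃ V : ValuationSubring K, (∀ a : A, algebraMap A K a ∈ V) ∧
      V.valuation (algebraMap A K ϖ) < 1 ∧ V.valuation x⁻¹ < 1 := by
  have hx0 : x ≠ 0 := by rintro rfl; exact hx isIntegral_zero
  let inst : Invertible x⁻¹ := invertibleOfNonzero (inv_ne_zero hx0)
  have hxx : ⅟ (x⁻¹) = x := by rw [invOf_eq_inv, inv_inv]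
  obtain ⟨V, h1, h2⟩ := exVsub _ _ (exNe ϖ hZar x⁻¹ (by rwa [hxx]))
  refine ⟨V, fun a => h1 (algebraMap A _ a), ?_, ?_⟩
  · exact h2 (algebraMap A _ ϖ) (Ideal.mem_sup_left (Ideal.mem_map_of_mem _
      (Ideal.mem_span_singleton_self _)))
  · exact h2 _ (Ideal.mem_sup_right (Ideal.mem_span_singleton_self _))

theorem exPrime {A L : Type*} [CommRing A] [CommRing L] [Algebra A L] (x : L)
    (hx : ¬ IsIntegral A x) : ∃ p : Ideal L, p.IsPrime ∧
      ∀ f : Polynomial A, f.Monic → Polynomial.aeval x f ∉ p := by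
  let M : Submonoid L :=
    { carrier := {z | ∃ f : Polynomial A, f.Monic ∧ Polynomial.aeval x f = z}
      one_mem' := ⟨1, Polynomial.monic_one, by simp⟩
      mul_mem' := by
        rintro _ _ ⟨f, hf, rfl⟩ ⟨g, hg, rfl⟩
        exact ⟨f * g, hf.mul hg, by simp⟩ }
  have hd : Disjoint ((⊥ : Ideal L) : Set L) M := by
    rw [Set.disjoint_left]
    rintro z hz ⟨f, hf, h⟩
    have hz : z = 0 := by simpa using hz
    exact hx ⟨f, hf, by rw [← Polynomial.aeval_def, h, hz]⟩
  obtain ⟨p, hp, -, hpd⟩ := Ideal.exists_le_prime_disjoint _ _ hd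
  rw [Set.disjoint_left] at hpd
  exact ⟨p, hp, fun f hf h => hpd h ⟨f, hf, rfl⟩⟩

theorem fieldCase {A K : Type*} [CommRing A] [Field K] [Algebra A K] (ϖ g : A)
    (hZar : ϖ ∈ (⊥ : Ideal A).jacobson)
    (hNoeth : ∃ R : Subring A, IsNoetherianRing ↥R ∧ ∀ x : A, IsIntegral ↥R x)
    (hϖ0 : algebraMap A K ϖ ≠ 0) (hg0 : algebraMap A K g ≠ 0) (x : K)
    (h : ∀ j : ℕ, 0 < j → ∃ m : ℕ, ∀ n : ℕ, (algebraMap A K ϖ) ^ m * x ^ n ∈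
              Algebra.adjoin A {(algebraMap A K ϖ) ^ j * (algebraMap A K g)⁻¹}) :
    IsIntegral A x := by
  by_contra hx
  have hx0 : x ≠ 0 := by rintro rfl; exact hx isIntegral_zero
  obtain ⟨V₀, hA₀, hϖ₀, hx₀⟩ := exV0 ϖ hZar x hx
  obtain ⟨R, hR, hRA⟩ := hNoeth
  set a := algebraMap A K ϖ with ha
  set c := algebraMap A K g with hc
  let S := Algebra.adjoin R {a, c, x⁻¹}
  have hSn : IsNoetherianRing S := by
    have : Algebra.FiniteType R S := (Subalgebra.fg_iff_finiteType S).1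
      (Subalgebra.fg_def.2 ⟨{a, c, x⁻¹}, by simp, rfl⟩)
    exact Algebra.FiniteType.isNoetherianRing R S
  let T : Subring K := S.toSubring
  have : IsNoetherianRing T := hSn
  have hTV : T ≤ V₀.toSubring := by
    intro z hz
    have hz : z ∈ S := hz
    induction hz using Algebra.adjoin_induction with
    | mem w hw =>
      rcases hw with rfl | rfl | rfl
      · exact hA₀ _
      · exact hA₀ _
      · exact (V₀.valuation_le_one_iff _).1 hx₀.le
    | algebraMap r => exact hA₀ r
    | add x y _ _ h1 h2 => exact add_mem (h1 ‹_›) (h2 ‹_›)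
    | mul x y _ _ h1 h2 => exact mul_mem (h1 ‹_›) (h2 ‹_›)
  have haT : a ∈ T := Algebra.subset_adjoin (R := R) (by simp)
  have hcT : c ∈ T := Algebra.subset_adjoin (R := R) (by simp)
  have hxT : x⁻¹ ∈ T := Algebra.subset_adjoin (R := R) (by simp)
  obtain ⟨V, hV, hVa, hVx, hVk⟩ := core2 T a x⁻¹ haT hxT hϖ0 (inv_ne_zero hx0) V₀ hTV hϖ₀ hx₀
  have hAV : ∀ r : A, algebraMap A K r ∈ V := by
    intro r
    let φ : R →+* V := ((algebraMap A K).comp R.subtype).codRestrict V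
      (fun r => hV (S.algebraMap_mem r))
    have hi : IsIntegral V (algebraMap A K r) :=
      IsIntegral.map_of_comp_eq φ (algebraMap A K) (by ext; rfl) (hRA r)
    obtain ⟨y, hy⟩ := IsIntegrallyClosed.isIntegral_iff.1 hi
    rw [← hy]; exact y.2
  obtain ⟨k, hk⟩ := (hVk c hcT hg0).1
  obtain ⟨m, hm⟩ := h (k + 1) k.succ_pos
  obtain ⟨n, hn⟩ := (hVk (a ^ (m + 1)) (pow_mem haT _) (pow_ne_zero _ hϖ0)).2
  have hCV : ∀ z ∈ Algebra.adjoin A {a ^ (k + 1) * c⁻¹}, z ∈ V := by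
    intro z hz
    induction hz using Algebra.adjoin_induction with
    | mem z hz =>
      rw [Set.mem_singleton_iff.1 hz]
      refine (V.valuation_le_one_iff _).1 ?_
      rw [map_mul, map_inv₀, map_pow, ← div_eq_mul_inv]
      refine div_le_one_of_le₀ (le_trans ?_ hk) zero_le
      exact pow_le_pow_right_of_le_one' hVa.le (Nat.le_succ k)
    | algebraMap r => exact hAV r
    | add x y _ _ h1 h2 => exact add_mem h1 h2
    | mul x y _ _ h1 h2 => exact mul_mem h1 h2
  have h1 := (V.valuation_le_one_iff _).2 (hCV _ (hm n))
  have e : a ^ m = (a ^ m * x ^ n) * (x⁻¹) ^ n := by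
    rw [mul_assoc, ← mul_pow, mul_inv_cancel₀ hx0, one_pow, mul_one]
  have h2 : V.valuation a ^ m ≤ V.valuation a ^ (m + 1) := by
    calc V.valuation a ^ m = V.valuation (a ^ m * x ^ n) * V.valuation x⁻¹ ^ n := by
          rw [← map_pow, e, map_mul, map_pow _ x⁻¹, ← e]
      _ ≤ V.valuation x⁻¹ ^ n := mul_le_of_le_one_left' h1
      _ ≤ _ := by rw [← map_pow _ a]; exact hn
  have hpos : 0 < V.valuation a := by
    rw [zero_lt_iff]; exact (V.valuation.ne_zero_iff).2 hϖ0
  exact absurd h2 (not_le.2 (pow_lt_pow_right_of_lt_one₀ hpos hVa (Nat.lt_succ_self m)))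

theorem easyDir {A L : Type*} [CommRing A] [CommRing L] [Algebra A L] (ϖ g : A)
    [IsLocalization.Away (ϖ * g) L]
    (ginv : L) (hginv : ginv * algebraMap A L g = 1) (x : L) (hx : IsIntegral A x) (j : ℕ) :
    ∃ m : ℕ, ∀ n : ℕ, (algebraMap A L ϖ) ^ m * x ^ n ∈
              Algebra.adjoin A {(algebraMap A L ϖ) ^ j * ginv} := by
  set C := Algebra.adjoin A {(algebraMap A L ϖ) ^ j * ginv} with hC
  have hϖC : ∀ m : ℕ, (algebraMap A L ϖ) ^ m ∈ C := fun m => pow_mem (C.algebraMap_mem _) _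
  have h1 : ∀ z : L, ∃ m : ℕ, (algebraMap A L ϖ) ^ m * z ∈ C := by
    intro z
    obtain ⟨k, a, h⟩ := IsLocalization.Away.surj (ϖ * g) z
    refine ⟨j * k + k, ?_⟩
    have : (algebraMap A L ϖ) ^ (j * k + k) * z
        = algebraMap A L a * ((algebraMap A L ϖ) ^ j * ginv) ^ k := by
      rw [← h, map_mul]
      have : (ginv * algebraMap A L g) ^ k = 1 := by rw [hginv, one_pow]
      calc _ = (algebraMap A L ϖ) ^ (j * k + k) * z * (ginv * algebraMap A L g) ^ k := by
            rw [this, mul_one]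
        _ = _ := by ring
    rw [this]
    exact mul_mem (C.algebraMap_mem _) (pow_mem (Algebra.self_mem_adjoin_singleton _ _) _)
  have h2 : ∀ N : Submodule A L, N.FG → ∃ m : ℕ, ∀ z ∈ N, (algebraMap A L ϖ) ^ m * z ∈ C := by
    intro N hN
    induction N, hN using Submodule.fg_induction with
    | singleton z =>
      obtain ⟨m, hm⟩ := h1 z
      refine ⟨m, fun w hw => ?_⟩
      obtain ⟨r, rfl⟩ := Submodule.mem_span_singleton.1 hw
      rw [mul_smul_comm]
      exact C.smul_mem hm r
    | sup N₁ N₂ _ _ ih1 ih2 =>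
      obtain ⟨m1, h1⟩ := ih1
      obtain ⟨m2, h2⟩ := ih2
      refine ⟨m1 + m2, fun w hw => ?_⟩
      obtain ⟨y, hy, z, hz, rfl⟩ := Submodule.mem_sup.1 hw
      have : (algebraMap A L ϖ) ^ (m1 + m2) * (y + z) =
        (algebraMap A L ϖ) ^ m2 * ((algebraMap A L ϖ) ^ m1 * y)
          + (algebraMap A L ϖ) ^ m1 * ((algebraMap A L ϖ) ^ m2 * z) := by ring
      rw [this]
      exact add_mem (mul_mem (hϖC _) (h1 y hy)) (mul_mem (hϖC _) (h2 z hz))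
  obtain ⟨m, hm⟩ := h2 _ hx.fg_adjoin_singleton
  exact ⟨m, fun n => hm _ (pow_mem (Algebra.self_mem_adjoin_singleton A x) n)⟩



/-- **Riemann extension theorem I.**  Let `A` be a ring with a nonzero divisor
`ϖ` contained in the Jacobson radical of `A` (i.e. `A` is `ϖ`-adically Zariskian) and integral
over a Noetherian subring, and let `g ∈ A` be a nonzero divisor.  Then, inside `A[1/(ϖg)]`,
the integral closure of `A` equals `⋂_{j>0} A^{j∘}`, where
`A^{j∘} = {x : ∃ m, ϖ^m x^n ∈ A[ϖ^j/g] for all n}` is the ring of power-bounded elements of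
the Tate ring associated to `(A[ϖ^j/g], (ϖ))`. -/
theorem riemannExtension_zariskian
    (A : Type*) [CommRing A] (ϖ g : A)
    (hϖ : ϖ ∈ nonZeroDivisors A) (hg : g ∈ nonZeroDivisors A)
    (hZar : ϖ ∈ (⊥ : Ideal A).jacobson)
    (hNoeth : ∃ R : Subring A, IsNoetherianRing ↥R ∧ ∀ x : A, IsIntegral ↥R x)
    (L : Type*) [CommRing L] [Algebra A L] [IsLocalization.Away (ϖ * g) L]
    (ginv : L) (hginv : ginv * algebraMap A L g = 1) :
    (integralClosure A L : Set L)
      = ⋂ j : ℕ, ⋂ (_ : 0 < j),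
          {x : L | ∃ m : ℕ, ∀ n : ℕ,
            (algebraMap A L ϖ) ^ m * x ^ n ∈
              Algebra.adjoin A {(algebraMap A L ϖ) ^ j * ginv}} := by
  ext x
  simp only [Set.mem_iInter, Set.mem_ofPred_eq, SetLike.mem_coe, mem_integralClosure_iff]
  refine ⟨fun hx j _ => easyDir ϖ g ginv hginv x hx j, fun h => ?_⟩
  by_contra hx
  obtain ⟨p, hp, hpf⟩ := exPrime x hx
  let K := FractionRing (L ⧸ p)
  let F : L →ₐ[A] K := IsScalarTower.toAlgHom A L K
  have hu : IsUnit (algebraMap A L (ϖ * g)) := IsLocalization.Away.algebraMap_isUnit _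
  rw [map_mul] at hu
  have hu1 : algebraMap A K ϖ ≠ 0 := by
    rw [← F.commutes]; exact ((isUnit_of_mul_isUnit_left hu).map F).ne_zero
  have hu2 : algebraMap A K g ≠ 0 := by
    rw [← F.commutes]; exact ((isUnit_of_mul_isUnit_right hu).map F).ne_zero
  have hgi : F ginv = (algebraMap A K g)⁻¹ := by
    refine eq_inv_of_mul_eq_one_left ?_
    rw [← F.commutes, ← map_mul, hginv, map_one]
  have hint : IsIntegral A (F x) := by
    refine fieldCase ϖ g hZar hNoeth hu1 hu2 (F x) fun j hj => ?_
    obtain ⟨m, hm⟩ := h j hj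
    refine ⟨m, fun n => ?_⟩
    have := (Subalgebra.mem_map (f := F)).2 ⟨_, hm n, rfl⟩
    rw [AlgHom.map_adjoin, Set.image_singleton] at this
    simpa [hgi] using this
  obtain ⟨f, hf, hf0⟩ := hint
  refine hpf f hf ?_
  rw [← Polynomial.aeval_def, Polynomial.aeval_algHom_apply] at hf0
  have h3 : algebraMap (L ⧸ p) K (Ideal.Quotient.mk p (Polynomial.aeval x f)) = 0 := hf0
  rw [← Ideal.Quotient.eq_zero_iff_mem]
  exact (FaithfulSMul.algebraMap_eq_zero_iff (L ⧸ p) K).1 h3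
end

section
/- Let A₀ be a ring that is integral over a Noetherian subring, and let t ∈ A₀ be a nonzero divisor. Then an element a ∈ A₀[1/t] is integral over A₀ if and only if it is almost integral over A₀, i.e. if and only if there exists m ≥ 0 such that t^m a^n lies in the image of A₀ in A₀[1/t] for all n ≥ 0. -/
lemma core_unit {C L : Type*} [CommRing C] [CommRing L] [Algebra C L] [IsNoetherianRing C]
    (hinj : Function.Injective (algebraMap C L)) (y t : C) (a : L)
    (hy : algebraMap C L y * a = 1) (ht : IsUnit (algebraMap C L t))
    (m : ℕ) (h : ∀ n : ℕ, IsIntegral C (algebraMap C L t ^ m * a ^ n)) : IsUnit y := by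
  by_contra hu
  have hne : Ideal.span {y} ≠ ⊤ := by rwa [Ne, Ideal.span_singleton_eq_top]
  obtain ⟨P, hP⟩ := Ideal.nonempty_minimalPrimes hne
  have hPp : P.IsPrime := hP.1.1
  have hyP : y ∈ P := hP.1.2 (Ideal.mem_span_singleton_self y)
  have hht := Ideal.height_le_one_of_isPrincipal_of_mem_minimalPrimes _ P hP
  have ht0 : t ∈ nonZeroDivisors C := by
    rw [mem_nonZeroDivisors_iff_right]
    intro z hz
    apply hinj
    rw [map_zero]
    apply ht.mul_left_injective
    simp only [← map_mul, hz, map_zero, zero_mul]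
  obtain ⟨u, hu, N, c, hc⟩ : ∃ u ∉ P, ∃ N : ℕ, ∃ c, c * t ^ m = u * y ^ N := by
    by_contra hcon
    push Not at hcon
    obtain ⟨q, hq, hIq, hdis⟩ := Ideal.exists_le_prime_disjoint (Ideal.span {t ^ m})
      (P.primeCompl ⊔ Submonoid.powers y) (by
        rw [Set.disjoint_left]
        intro x hx hx'
        obtain ⟨u, hu, _, ⟨N, rfl⟩, rfl⟩ := Submonoid.mem_sup.1 hx'
        obtain ⟨c, hc⟩ := Ideal.mem_span_singleton'.1 hx
        exact hcon u hu N c hc)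
    rw [Set.disjoint_left] at hdis
    have hqP : q ≤ P := fun x hx => by
      by_contra hxP
      exact hdis hx (Submonoid.mem_sup_left (S := P.primeCompl) hxP)
    have htq : t ∈ q := hq.mem_of_pow_mem m (hIq (Ideal.mem_span_singleton_self _))
    have hyq : y ∉ q := fun hx => hdis hx (Submonoid.mem_sup_right (Submonoid.mem_powers y))
    have hlt : q < P := lt_of_le_of_ne hqP (by rintro rfl; exact hyq hyP)
    have h1 := (Ideal.height_add_one_le_of_lt_of_isPrime hlt).trans hht
    have h0 : q.height = 0 := by
      by_contra h0
      have h2 : 1 ≤ q.height := Order.one_le_iff_ne_zero.2 h0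
      have h3 : (1 : ℕ∞) + 1 ≤ 1 := (by gcongr : (1 : ℕ∞) + 1 ≤ q.height + 1).trans h1
      exact absurd h3 (by decide)
    rw [Ideal.height_eq_zero_iff] at h0
    exact Set.disjoint_left.1 (Ideal.disjoint_nonZeroDivisors_of_mem_minimalPrimes h0) htq ht0
  set g := algebraMap C L with hg
  have key : g u = (g c * (g t ^ m * a ^ (N + 1))) * g y := by
    have hc' := congrArg g hc
    simp only [map_mul, map_pow] at hc'
    have e : (g y * a) ^ (N + 1) = 1 := by rw [hy, one_pow]
    calc g u = g u * (g y ^ N * a ^ N) := by rw [← mul_pow, hy, one_pow, mul_one]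
      _ = (g c * g t ^ m) * a ^ N * (g y * a) := by rw [hc', hy]; ring
      _ = _ := by ring
  obtain ⟨Q, -, hQ, hQP⟩ := Ideal.exists_ideal_over_prime_of_isIntegral
    (S := integralClosure C L) P ⊥ (by
      intro x hx
      have hx' : algebraMap C (integralClosure C L) x = 0 := hx
      have : g x = 0 := congrArg Subtype.val hx'
      rw [hinj (this.trans (map_zero g).symm)]
      exact P.zero_mem)
  apply hu
  rw [← hQP, Ideal.mem_comap]
  have hz : IsIntegral C (g c * (g t ^ m * a ^ (N + 1))) := isIntegral_algebraMap.mul (h _)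
  have : algebraMap C (integralClosure C L) u =
      (⟨_, hz⟩ : integralClosure C L) * algebraMap C (integralClosure C L) y :=
    Subtype.ext key
  rw [this]
  apply Q.mul_mem_left
  rw [← Ideal.mem_comap, hQP]
  exact hyP

lemma integral_of_mem_adjoin {B L : Type*} [CommRing B] [CommRing L] [Algebra B L] (a y : L)
    (hy : y * a = 1) (h : a ∈ Algebra.adjoin B {y}) : IsIntegral B a := by
  rw [Algebra.adjoin_singleton_eq_range_aeval] at h
  obtain ⟨p, hp⟩ := h
  have hp : Polynomial.aeval y p = a := hp
  refine ⟨Polynomial.X ^ (p.natDegree + 1) - p.reverse, ?_, ?_⟩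
  · apply Polynomial.monic_X_pow_sub
    refine (Polynomial.degree_le_of_natDegree_le p.reverse_natDegree_le).trans_lt ?_
    exact_mod_cast Nat.lt_succ_self _
  · let inv : Invertible y := ⟨a, by rw [mul_comm, hy], hy⟩
    have h2 := Polynomial.eval₂_reverse_mul_pow (algebraMap B L) y p
    change Polynomial.eval₂ (algebraMap B L) a p.reverse * y ^ p.natDegree =
      Polynomial.aeval y p at h2
    rw [hp] at h2
    rw [Polynomial.eval₂_sub, Polynomial.eval₂_X_pow]
    have : a ^ p.natDegree * y ^ p.natDegree = 1 := by rw [← mul_pow, mul_comm a, hy, one_pow]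
    linear_combination (-a ^ p.natDegree) * h2 +
      (Polynomial.eval₂ (algebraMap B L) a p.reverse) * this

lemma integral_of_away {B A : Type*} [CommRing B] [CommRing A] [Algebra B A] (a : A)
    (h : IsIntegral B (algebraMap A (Localization.Away a) a)) : IsIntegral B a := by
  obtain ⟨p, hp, hp0⟩ := h
  have : algebraMap A (Localization.Away a) (Polynomial.aeval a p) = 0 := by
    rw [← Polynomial.aeval_algebraMap_apply]; exact hp0
  obtain ⟨⟨_, n, rfl⟩, hn⟩ := (IsLocalization.map_eq_zero_iff (Submonoid.powers a) _ _).1 this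
  refine ⟨Polynomial.X ^ n * p, (Polynomial.monic_X_pow n).mul hp, ?_⟩
  rw [Polynomial.eval₂_mul, Polynomial.eval₂_X_pow]
  exact hn

lemma backward {R B A L : Type*} [CommRing R] [IsNoetherianRing R] [CommRing B] [CommRing A]
    [CommRing L] [Algebra R B] [Algebra B A] [Algebra A L] [Algebra B L] [Algebra R L]
    [IsScalarTower B A L] [IsScalarTower R B L] (hB : ∀ x : B, IsIntegral R x)
    (t : B) (ht : IsUnit (algebraMap B A t)) (a : A) (y : L) (hy : y * algebraMap A L a = 1)
    (m : ℕ) (h : ∀ n : ℕ, (algebraMap B A t) ^ m * a ^ n ∈ (algebraMap B A).range) :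
    IsIntegral B (algebraMap A L a) := by
  apply integral_of_mem_adjoin _ y hy
  let C := Algebra.adjoin R {algebraMap B L t, y}
  have hC : IsNoetherianRing C := isNoetherianRing_of_fg
    (Subalgebra.fg_def.2 ⟨{algebraMap B L t, y}, Set.toFinite _, rfl⟩)
  have htC : algebraMap B L t ∈ C := Algebra.subset_adjoin (by simp)
  have hyC : y ∈ C := Algebra.subset_adjoin (by simp)
  have hunit := core_unit (C := C) (L := L) Subtype.val_injective ⟨y, hyC⟩ ⟨_, htC⟩
    (algebraMap A L a) hy
    (by
      change IsUnit (algebraMap B L t)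
      rw [IsScalarTower.algebraMap_apply B A L]
      exact ht.map _) m (by
      intro n
      change IsIntegral C ((algebraMap B L t) ^ m * _)
      obtain ⟨x, hx⟩ := h n
      have : (algebraMap B L t) ^ m * (algebraMap A L a) ^ n = algebraMap B L x := by
        rw [IsScalarTower.algebraMap_apply B A L, IsScalarTower.algebraMap_apply B A L, hx]
        simp
      rw [this]
      exact ((hB x).map (IsScalarTower.toAlgHom R B L)).tower_top)
  obtain ⟨z, hz⟩ := hunit.exists_right_inv
  have hz' : y * (z : L) = 1 := congrArg Subtype.val hz
  have hza : algebraMap A L a = z := by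
    linear_combination (-algebraMap A L a) * hz' + (z : L) * hy
  rw [hza]
  have hle : C ≤ (Algebra.adjoin B {y}).restrictScalars R := by
    apply Algebra.adjoin_le
    intro w hw
    have hw' : w = algebraMap B L t ∨ w = y := by simpa using hw
    rw [SetLike.mem_coe, Subalgebra.mem_restrictScalars]
    rcases hw' with hw' | hw'
    · rw [hw']
      exact Subalgebra.algebraMap_mem _ t
    · rw [hw']
      exact Algebra.self_mem_adjoin_singleton B y
  exact (Subalgebra.mem_restrictScalars R).1 (hle z.2)

lemma forward {R S : Type*} [CommRing R] [CommRing S] [Algebra R S] {s : S} (H : IsIntegral R s)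
    (t : S) (ht : t ∈ (algebraMap R S).range) (k : ℕ) (hk : t ^ k * s ∈ (algebraMap R S).range) :
    ∃ m : ℕ, ∀ n : ℕ, t ^ m * s ^ n ∈ (algebraMap R S).range := by
  refine ⟨k * (minpoly R s).natDegree, fun n ↦ ?_⟩
  induction n using Nat.strong_induction_on with | h n IH =>
  obtain hn | hn := lt_or_ge n (minpoly R s).natDegree
  · obtain ⟨j, hj⟩ := Nat.exists_eq_add_of_lt hn
    have : t ^ (k * (minpoly R s).natDegree) * s ^ n = t ^ (k * (j + 1)) * (t ^ k * s) ^ n := by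
      rw [hj]; ring
    rw [this]
    exact mul_mem (pow_mem ht _) (pow_mem hk _)
  have := minpoly.aeval R s
  rw [Polynomial.aeval_eq_sum_range, Finset.sum_range_succ, add_eq_zero_iff_eq_neg',
    Polynomial.coeff_natDegree, minpoly.monic H, one_smul] at this
  rw [← Nat.sub_add_cancel hn, pow_add s, this, mul_neg, mul_neg, Finset.mul_sum, Finset.mul_sum]
  refine neg_mem (sum_mem fun i hi ↦ ?_)
  rw [mul_smul_comm, mul_smul_comm, ← pow_add, Algebra.smul_def]
  simp only [Finset.mem_range] at hi
  exact mul_mem ⟨_, rfl⟩ (IH _ (by lia))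

/-- Let `A₀` be a ring that is integral over a Noetherian subring, and let
`t ∈ A₀` be a nonzero divisor.  Then an element `a ∈ A₀[1/t]` is integral over `A₀` if and only
if it is almost integral over `A₀`, i.e. iff there exists `m ≥ 0` such that `t^m * a^n` lies in
the image of `A₀` in `A₀[1/t]` for all `n ≥ 0`. -/
theorem integral_iff_almost_integral_of_isIntegral_noetherian
    (A₀ : Type*) [CommRing A₀]
    (hNoeth : ∃ R : Subring A₀, IsNoetherianRing ↥R ∧ ∀ x : A₀, IsIntegral ↥R x)
    (t : A₀) (ht : t ∈ nonZeroDivisors A₀)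
    (A : Type*) [CommRing A] [Algebra A₀ A] [IsLocalization.Away t A]
    (a : A) :
    IsIntegral A₀ a ↔
      ∃ m : ℕ, ∀ n : ℕ, (algebraMap A₀ A t) ^ m * a ^ n ∈ (algebraMap A₀ A).range := by
  constructor
  · intro H
    obtain ⟨k, x, hx⟩ : ∃ k : ℕ, ∃ x, algebraMap A₀ A x = algebraMap A₀ A t ^ k * a := by
      obtain ⟨⟨x, ⟨_, k, rfl⟩⟩, hx⟩ := IsLocalization.surj (Submonoid.powers t) a
      refine ⟨k, x, ?_⟩
      rw [← hx, mul_comm]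
      simp
    exact forward H _ ⟨t, rfl⟩ k ⟨x, hx⟩
  · rintro ⟨m, h⟩
    obtain ⟨R, hR, hint⟩ := hNoeth
    apply integral_of_away
    exact backward (R := R) (B := A₀) (A := A) (L := Localization.Away a) hint t
      (IsLocalization.Away.algebraMap_isUnit t) a (IsLocalization.Away.invSelf a)
      (by rw [mul_comm]; exact IsLocalization.Away.mul_invSelf a) m h
end

section
/- Let D be a ring containing a Noetherian subring R such that D is integral over R, let C be the localization of D at a multiplicative set consisting of nonzero divisors, and let S ⊆ D be a (possibly empty) subset consisting of nonzero divisors. Then an element x ∈ C lies in the integral closure of D in C if and only if v(x) ≤ 1 for every rank-≤1 semivaluation v on C satisfying v(d) ≤ 1 for all d ∈ D and v(g) ≠ 0 for all g ∈ S. -/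
open IsLocalRing in
theorem aux_center {K : Type*} [Field K] (A : Subring K) (q : Ideal A) [q.IsPrime] :
    ∃ V : ValuationSubring K, A ≤ V.toSubring ∧
      (∀ a : A, a ∈ q → V.valuation (a : K) < 1) ∧
      (∀ a : A, a ∉ q → V.valuation (a : K) = 1) := by
  have ⟨V, hV⟩ := (LocalSubring.ofPrime A q).exists_le_valuationSubring
  have hA : A ≤ V.toSubring := (LocalSubring.le_ofPrime ..).trans hV.1
  refine ⟨V, hA, ?_, ?_⟩
  · intro a ha
    have h1 : algebraMap A (LocalSubring.ofPrime A q).toSubring a ∈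
        maximalIdeal (LocalSubring.ofPrime A q).toSubring := by
      rw [← IsLocalization.AtPrime.map_eq_maximalIdeal q]
      exact Ideal.mem_map_of_mem _ ha
    have h2 := ((local_hom_TFAE (Subring.inclusion hV.1)).out 0 2).mp hV.2
    have h3 := h2 (Ideal.mem_map_of_mem _ h1)
    exact (V.valuation_lt_one_iff ⟨a, hA a.2⟩).mp h3
  · intro a ha
    have h1 : IsUnit (algebraMap A (LocalSubring.ofPrime A q).toSubring a) :=
      IsLocalization.map_units (M := q.primeCompl) _ ⟨a, ha⟩
    have h3 := h1.map (Subring.inclusion hV.1)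
    exact (V.valuation_eq_one_iff ⟨a, hA a.2⟩).mp h3

theorem aux_height {A : Type*} [CommRing A] [IsDomain A] [IsNoetherianRing A] (q : Ideal A) [q.IsPrime]
    (hq : q.height ≤ 1) (y a : A) (hy : y ∈ q) (ha : a ≠ 0) :
    ∃ n : ℕ, ∃ s ∉ q, a ∣ s * y ^ n := by
  by_contra! H
  obtain ⟨p, hp, hap, hd⟩ := Ideal.exists_le_prime_disjoint (Ideal.span {a})
    (q.primeCompl ⊔ Submonoid.powers y) (by
      rw [Set.disjoint_left]
      intro z hz hz'
      obtain ⟨s, hs, _, ⟨n, rfl⟩, rfl⟩ := Submonoid.mem_sup.mp hz'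
      exact H n s hs (Ideal.mem_span_singleton.mp hz))
  rw [Set.disjoint_left] at hd
  have hpq : p < q := by
    refine lt_of_le_of_ne (fun z hz => ?_) ?_
    · by_contra hzq
      exact hd hz (SetLike.le_def.mp le_sup_left hzq)
    · rintro rfl
      exact hd hy (SetLike.le_def.mp le_sup_right (Submonoid.mem_powers y))
  have h1 := (Ideal.height_strict_mono_of_isPrime hpq).trans_le hq
  rw [Order.lt_one_iff, Ideal.height_eq_zero_iff_eq_bot] at h1
  subst h1
  exact ha (by simpa using hap)

theorem aux_coarsen {K : Type*} [Field K] (V : ValuationSubring K) (x : K)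
    (hx : 1 < V.valuation x)
    (H : ∀ z : K, ∃ n : ℕ, V.valuation z ≤ V.valuation x ^ n) :
    ∃ v : Valuation K NNReal, (∀ z ∈ V, v z ≤ 1) ∧ 1 < v x := by
  let W : ValuationSubring K :=
    { carrier := {w | ∀ n : ℕ, V.valuation w ^ n < V.valuation x}
      mul_mem' := by
        intro a b ha hb n
        rw [map_mul]
        rcases le_total (V.valuation a) (V.valuation b) with h | h
        · refine lt_of_le_of_lt ?_ (hb (2 * n))
          rw [pow_mul, pow_two]; gcongr
        · refine lt_of_le_of_lt ?_ (ha (2 * n))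
          rw [pow_mul, pow_two]; gcongr
      one_mem' := by intro n; simpa using hx
      add_mem' := by
        intro a b ha hb n
        have := V.valuation.map_add a b
        rcases le_max_iff.mp this with h | h
        · exact lt_of_le_of_lt (by gcongr) (ha n)
        · exact lt_of_le_of_lt (by gcongr) (hb n)
      zero_mem' := by
        intro n
        refine lt_of_le_of_lt (pow_le_one₀ ?_ ?_) hx <;> simp
      neg_mem' := by intro a ha n; rw [Valuation.map_neg]; exact ha n
      mem_or_inv_mem' := by
        intro a
        rcases V.mem_or_inv_mem a with h | h
        · left
          intro n
          exact lt_of_le_of_lt (pow_le_one₀ (by simp) ((V.valuation_le_one_iff _).mpr h)) hx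
        · right
          intro n
          exact lt_of_le_of_lt (pow_le_one₀ (by simp) ((V.valuation_le_one_iff _).mpr h)) hx }
  have memW : ∀ w, w ∈ W ↔ ∀ n : ℕ, V.valuation w ^ n < V.valuation x := fun w => Iff.rfl
  have hVW : ∀ z ∈ V, z ∈ W := by
    intro z hz n
    exact lt_of_le_of_lt (pow_le_one₀ (by simp) ((V.valuation_le_one_iff _).mpr hz)) hx
  have hxW : 1 < W.valuation x := by
    rw [← not_le, W.valuation_le_one_iff, memW]
    push Not
    exact ⟨1, by simp⟩
  have hx0 : x ≠ 0 := by rintro rfl; simp at hx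
  have : MulArchimedean W.ValueGroup := by
    constructor
    intro b a ha
    obtain ⟨b, rfl⟩ := W.valuation_surjective b
    obtain ⟨a, rfl⟩ := W.valuation_surjective a
    have ha0 : a ≠ 0 := by rintro rfl; simp at ha
    rw [← not_le, W.valuation_le_one_iff, memW] at ha
    push Not at ha
    obtain ⟨n, hn⟩ := ha
    obtain ⟨m, hm⟩ := H b
    refine ⟨n * m, ?_⟩
    have h1 : V.valuation b ≤ V.valuation (a ^ (n * m)) := by
      refine hm.trans ?_
      rw [map_pow, pow_mul]; gcongr
    obtain ⟨c, hc⟩ := (V.valuation_le_iff _ _).mp h1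
    rw [← map_pow]
    exact (W.valuation_le_iff _ _).mpr ⟨⟨c, hVW _ c.2⟩, hc⟩
  have : W.valuation.IsNontrivial := ⟨⟨x, by simpa using hx0, hxW.ne'⟩⟩
  have h' : MulArchimedean (MonoidWithZeroHom.ValueGroup₀ (.ofClass W.valuation)) :=
    MulArchimedean.comap MonoidWithZeroHom.ValueGroup₀.embedding.toMonoidHom
      MonoidWithZeroHom.ValueGroup₀.embedding_strictMono
  rw [← W.valuation.nonempty_rankOne_iff_mulArchimedean] at h'
  obtain ⟨f⟩ := h'
  refine ⟨W.valuation.restrict.map f.hom' f.strictMono'.monotone, ?_, ?_⟩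
  · intro z hz
    have : W.valuation.restrict z ≤ 1 := by
      rw [Valuation.restrict_le_one_iff, W.valuation_le_one_iff]; exact hVW z hz
    have := f.strictMono'.monotone this
    simpa using this
  · have : 1 < W.valuation.restrict x := by
      rw [← not_le, Valuation.restrict_le_one_iff, not_le]; exact hxW
    have := f.strictMono' this
    simpa using this

open Algebra Polynomial in
theorem aux_field {K : Type*} [Field K] (R : Subring K) [IsNoetherianRing R]
    (halg : ∀ z : K, IsAlgebraic R z) (x : K) (hx : ¬ IsIntegral R x) :
    ∃ v : Valuation K NNReal, (∀ r ∈ R, v r ≤ 1) ∧ 1 < v x := by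
  have hx0 : x ≠ 0 := by rintro rfl; exact hx isIntegral_zero
  let := invertibleOfNonzero hx0
  let B := Algebra.adjoin R {x⁻¹}
  let A : Subring K := B.toSubring
  have hRA : ∀ r ∈ R, r ∈ A := fun r hr => B.algebraMap_mem ⟨r, hr⟩
  have hNA : IsNoetherianRing A :=
    isNoetherianRing_of_fg (S := B) ⟨{x⁻¹}, by simp [B]⟩
  let y : A := ⟨x⁻¹, subset_adjoin rfl⟩
  have hy : Ideal.span {y} ≠ ⊤ := fun eq ↦ hx <|
    have ⟨p, hp, hpx⟩ := exists_aeval_invOf_eq_zero_of_idealMap_adjoin_sup_span_eq_top _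
      (⊥ : Ideal R) bot_ne_top (top_unique <| eq.ge.trans le_add_self)
    ⟨p, by simpa [Monic, sub_eq_zero] using hp, hpx⟩
  obtain ⟨q, hq⟩ := Ideal.nonempty_minimalPrimes hy
  have hqp : q.IsPrime := hq.1.1
  have hh := Ideal.height_le_one_of_isPrincipal_of_mem_minimalPrimes _ q hq
  have hyq : y ∈ q := hq.1.2 (Ideal.mem_span_singleton_self y)
  obtain ⟨V, hAV, hV1, hV2⟩ := aux_center A q
  have hvy : V.valuation x⁻¹ < 1 := hV1 y hyq
  have hvx : 1 < V.valuation x := by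
    rw [map_inv₀] at hvy
    exact (inv_lt_one₀ (by simpa [zero_lt_iff] using hx0)).mp hvy
  have key : ∀ z : K, ∃ n : ℕ, V.valuation z ≤ V.valuation x ^ n := by
    intro z
    rcases V.mem_or_inv_mem z with hz | hz
    · exact ⟨0, by simpa using (V.valuation_le_one_iff _).mpr hz⟩
    rcases eq_or_ne z 0 with rfl | hz0
    · exact ⟨0, by simp⟩
    obtain ⟨t, ht, r, hr, eq⟩ := (halg z⁻¹).exists_nonzero_eq_adjoin_mul
      (mem_nonZeroDivisors_of_ne_zero (inv_ne_zero hz0))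
    have htV : t ∈ V := by
      have : Algebra.adjoin R {z⁻¹} ≤
          ({ V.toSubring with algebraMap_mem' := fun r => hAV (hRA _ r.2) } : Subalgebra R K) :=
        Algebra.adjoin_le (by simpa using hz)
      exact this ht
    obtain ⟨n, s, hs, c, hc⟩ := aux_height q hh y ⟨r, hRA _ r.2⟩ hyq (by
      intro h; apply hr; ext; simpa using congr_arg Subtype.val h)
    refine ⟨n, ?_⟩
    have hc' : (s : K) * x⁻¹ ^ n = r * c := congr_arg Subtype.val hc
    have e1 : V.valuation x⁻¹ ^ n = V.valuation r * V.valuation c := by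
      rw [← map_mul, ← hc', map_mul, hV2 s hs, one_mul, map_pow]
    have e2 : V.valuation x⁻¹ ^ n ≤ V.valuation z⁻¹ := by
      have e3 : V.valuation (r : K) ≤ V.valuation z⁻¹ := by
        have : (r : K) = z⁻¹ * t := eq.symm
        rw [this, map_mul]
        exact mul_le_of_le_one_right' ((V.valuation_le_one_iff _).mpr htV)
      rw [e1]
      exact (mul_le_of_le_one_right' ((V.valuation_le_one_iff _).mpr (hAV c.2))).trans e3
    rw [map_inv₀, map_inv₀, inv_pow] at e2
    exact (inv_le_inv₀ (pow_pos (by simpa [zero_lt_iff] using hx0) _)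
      (by simpa [zero_lt_iff] using hz0)).mp e2
  obtain ⟨v, hv, hvx⟩ := aux_coarsen V x hvx key
  exact ⟨v, fun r hr => hv r (hAV (hRA r hr)), hvx⟩

theorem aux_integral {A B : Type*} [CommRing A] [CommRing B] (f : A →+* B)
    (v : Valuation B NNReal) (hv : ∀ a, v (f a) ≤ 1) (x : B) (hx : f.IsIntegralElem x) :
    v x ≤ 1 := by
  have hi := Valuation.integer.integers v
  refine hi.isIntegral_iff_v_le_one.mp ?_
  obtain ⟨p, hp, hpx⟩ := hx
  let g : A →+* v.integer := f.codRestrict v.integer hv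
  refine ⟨p.map g, hp.map g, ?_⟩
  rw [Polynomial.eval₂_map]
  exact hpx

theorem mem_integralClosure_iff_le_one_of_semivaluations
    (D : Type*) [CommRing D]
    (hNoeth : ∃ R : Subring D, IsNoetherianRing ↥R ∧ ∀ x : D, IsIntegral ↥R x)
    (M : Submonoid D) (hM : M ≤ nonZeroDivisors D)
    (C : Type*) [CommRing C] [Algebra D C] [IsLocalization M C]
    (S : Set D) (hS : ∀ g ∈ S, g ∈ nonZeroDivisors D)
    (x : C) :
    x ∈ integralClosure D C ↔
      ∀ v : Valuation C NNReal,
        (∀ d : D, v (algebraMap D C d) ≤ 1) →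
        (∀ g ∈ S, v (algebraMap D C g) ≠ 0) →
        v x ≤ 1 := by
  constructor
  · intro hx v hv _
    exact aux_integral _ v hv x hx
  intro H
  by_contra hx
  obtain ⟨R, hR, hint⟩ := hNoeth
  let T : Submonoid C :=
    { carrier := {c | ∃ f : Polynomial D, f.Monic ∧ Polynomial.aeval x f = c}
      one_mem' := ⟨1, Polynomial.monic_one, by simp⟩
      mul_mem' := by
        rintro _ _ ⟨f, hf, rfl⟩ ⟨g, hg, rfl⟩
        exact ⟨f * g, hf.mul hg, by simp⟩ }
  obtain ⟨P0, hP0, -, hd⟩ := Ideal.exists_le_prime_disjoint (⊥ : Ideal C) T (by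
    rw [Set.disjoint_left]
    rintro z hz ⟨f, hf, rfl⟩
    exact hx ⟨f, hf, Ideal.mem_bot.mp hz⟩)
  obtain ⟨P, hPmin, hPP⟩ := Ideal.exists_minimalPrimes_le (I := (⊥ : Ideal C)) (J := P0) bot_le
  have hP : P.IsPrime := hPmin.1.1
  let K := FractionRing (C ⧸ P)
  let φ : C →+* K := (algebraMap (C ⧸ P) K).comp (Ideal.Quotient.mk P)
  have hφ : ∀ c, φ c = 0 ↔ c ∈ P := by
    intro c
    rw [← Ideal.Quotient.eq_zero_iff_mem]
    exact map_eq_zero_iff _ (IsFractionRing.injective (C ⧸ P) K)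
  have hnz : ∀ d ∈ nonZeroDivisors D, φ (algebraMap D C d) ≠ 0 := by
    intro d hd h
    exact notMem_nonZeroDivisors_of_mem_mem_minimalPrimes ((hφ _).mp h) hPmin
      (IsLocalization.map_nonZeroDivisors_le M C ⟨d, hd, rfl⟩)
  let ψ : R →+* K := (φ.comp (algebraMap D C)).comp R.subtype
  let R0 : Subring K := ψ.range
  have hN : IsNoetherianRing R0 := isNoetherianRing_range ψ
  have hDint : ∀ d : D, IsIntegral R0 (φ (algebraMap D C d)) := by
    intro d
    obtain ⟨p, hp, hpx⟩ := hint d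
    refine ⟨p.map ψ.rangeRestrict, hp.map _, ?_⟩
    rw [Polynomial.eval₂_map]
    have := congr_arg (φ.comp (algebraMap D C)) hpx
    rw [Polynomial.hom_eval₂, map_zero] at this
    exact this
  have hCalg : ∀ c : C, IsAlgebraic R0 (φ c) := by
    intro c
    obtain ⟨⟨d, m⟩, hc⟩ := IsLocalization.surj M c
    have h1 : φ c = φ (algebraMap D C d) * (φ (algebraMap D C m))⁻¹ := by
      rw [eq_mul_inv_iff_mul_eq₀ (hnz m (hM m.2)), ← map_mul, hc]
    rw [h1]
    exact (hDint d).isAlgebraic.mul (hDint m).isAlgebraic.inv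
  have halg : ∀ z : K, IsAlgebraic R0 z := by
    intro z
    obtain ⟨a, b, hb, rfl⟩ := IsFractionRing.div_surjective (A := C ⧸ P) z
    obtain ⟨a, rfl⟩ := Ideal.Quotient.mk_surjective a
    obtain ⟨b, rfl⟩ := Ideal.Quotient.mk_surjective b
    rw [div_eq_mul_inv]
    exact (hCalg a).mul (hCalg b).inv
  have hxn : ¬ IsIntegral R0 (φ x) := by
    rintro ⟨p, hp, hpx⟩
    obtain ⟨p', hp', -, hm⟩ := Polynomial.lifts_and_natDegree_eq_and_monic
      (f := ψ.rangeRestrict) ((Polynomial.lifts_iff_coeff_lifts p).mpr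
        (fun n => ψ.rangeRestrict_surjective _)) hp
    rw [← hp', Polynomial.eval₂_map] at hpx
    have h1 : φ (Polynomial.aeval x (p'.map R.subtype)) = 0 := by
      rw [Polynomial.aeval_def, Polynomial.eval₂_map, Polynomial.hom_eval₂]
      exact hpx
    exact Set.disjoint_left.mp hd (hPP ((hφ _).mp h1)) ⟨_, hm.map _, rfl⟩
  obtain ⟨v, hv, hvx⟩ := aux_field R0 halg (φ x) hxn
  refine absurd (H (v.comap φ) ?_ ?_) (not_le.mpr hvx)
  · intro d
    exact aux_integral (algebraMap R0 K) v (fun r => hv _ r.2) _ (hDint d)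
  · intro g hg
    simpa using hnz g (hS g hg)
end

section
/- Let D be a ring containing a Noetherian subring over which it is integral, let t ∈ D be a nonzero divisor contained in the Jacobson radical of D, suppose D is integrally closed in D[1/t], and let g ∈ D be a nonzero divisor. Then the integral closure of D in D[1/(tg)] equals {x ∈ D[1/(tg)] : v(x) ≤ 1 for every rank-≤1 semivaluation v on D[1/(tg)] with v(d) ≤ 1 for all d ∈ D and v(t) < 1}. -/
open MonoidWithZeroHom MonoidWithZeroHom.ValueGroup₀ in
lemma aux_real {K : Type*} [Field K] (O : ValuationSubring K) (y : K)
    (hy0 : y ≠ 0) (hy : O.valuation y < 1)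
    (h : ∀ f : K, f ≠ 0 → ∃ n : ℕ, O.valuation y ^ n ≤ O.valuation f) :
    ∃ v : Valuation K NNReal, (∀ f ∈ O, v f ≤ 1) ∧ v y < 1 := by
  set w := O.valuation with hw
  have hwy0 : w y ≠ 0 := by simpa using hy0
  have hwypos : 0 < w y := zero_lt_iff.mpr hwy0
  let S : Subring K :=
    { carrier := {f | ∀ n : ℕ, w f ^ n * w y ≤ 1}
      zero_mem' := by
        intro n
        rcases n with _ | n
        · simpa using hy.le
        · simp
      one_mem' := by intro n; simpa using hy.le
      neg_mem' := by intro f hf n; simpa [Valuation.map_neg] using hf n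
      add_mem' := by
        intro a b ha hb n
        rcases le_total (w a) (w b) with hab | hab
        · refine le_trans ?_ (hb n)
          gcongr
          exact (w.map_add a b).trans (max_le hab le_rfl)
        · refine le_trans ?_ (ha n)
          gcongr
          exact (w.map_add a b).trans (max_le le_rfl hab)
      mul_mem' := by
        intro a b ha hb n
        rcases le_total (w a) (w b) with hab | hab
        · refine le_trans ?_ (hb (2 * n))
          rw [map_mul, pow_mul, pow_two]
          gcongr
        · refine le_trans ?_ (ha (2 * n))
          rw [map_mul, pow_mul, pow_two]
          gcongr }
  have hOS : O.toSubring ≤ S := by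
    intro f hf n
    have : w f ≤ 1 := (O.valuation_le_one_iff f).mpr hf
    calc w f ^ n * w y ≤ 1 * 1 := by
          gcongr
          exact pow_le_one₀ zero_le this
      _ = 1 := one_mul 1
  let O1 : ValuationSubring K := ValuationSubring.ofLE O S hOS
  have hmem : ∀ f, f ∈ O1 ↔ ∀ n : ℕ, w f ^ n * w y ≤ 1 := fun f => Iff.rfl
  set u := O1.valuation with hu
  have huy : u y < 1 := by
    rw [← ValuationSubring.mem_nonunits_iff, ValuationSubring.mem_nonunits_iff_or]
    right
    intro hmem'
    have := hmem' 2
    rw [map_inv₀, pow_two, mul_assoc, inv_mul_cancel₀ hwy0, mul_one] at this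
    exact absurd this (not_le.mpr ((one_lt_inv₀ hwypos).mpr hy))
  have hmono : ∀ a b, w a ≤ w b → u a ≤ u b := by
    intro a b hab
    rw [ValuationSubring.valuation_le_iff] at hab ⊢
    obtain ⟨c, hc⟩ := hab
    exact ⟨⟨c, hOS c.2⟩, hc⟩
  have hnt : u.IsNontrivial := ⟨y, by simpa using hy0, huy.ne⟩
  have harch : MulArchimedean O1.ValueGroup := by
    refine ⟨fun a b hb => ?_⟩
    obtain ⟨f, rfl⟩ := O1.valuation_surjective b
    obtain ⟨k, rfl⟩ := O1.valuation_surjective a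
    have hf : f ∉ O1 := fun hf => not_le.mpr hb ((O1.valuation_le_one_iff f).mpr hf)
    rw [hmem] at hf
    push Not at hf
    obtain ⟨n, hn⟩ := hf
    by_cases hk : k = 0
    · exact ⟨0, by simp [hk]⟩
    obtain ⟨m, hm⟩ := h k⁻¹ (inv_ne_zero hk)
    refine ⟨n * m, ?_⟩
    rw [← map_pow]
    apply hmono
    have h1 : 1 ≤ (w f ^ n) ^ m * w y ^ m := by
      rw [← mul_pow]; exact one_le_pow₀ hn.le
    have hk' : w k ≠ 0 := by simpa using hk
    rw [map_inv₀] at hm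
    calc w k = w k * 1 := (mul_one _).symm
      _ ≤ w k * ((w f ^ n) ^ m * w y ^ m) := by gcongr
      _ ≤ w k * ((w f ^ n) ^ m * (w k)⁻¹) := by gcongr
      _ = w (f ^ (n * m)) := by
        rw [mul_comm, mul_assoc, inv_mul_cancel₀ hk', mul_one, map_pow, pow_mul]
  have h' : MulArchimedean (ValueGroup₀ (.ofClass u)) :=
    MulArchimedean.comap embedding.toMonoidHom embedding_strictMono
  rw [← u.nonempty_rankOne_iff_mulArchimedean] at h'
  obtain ⟨r⟩ := h'
  have hsm := Valuation.RankOne.strictMono u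
  refine ⟨u.restrict.map (Valuation.RankOne.hom u) hsm.monotone, fun f hf => ?_, ?_⟩
  · have : u.restrict f ≤ 1 := by
      rw [Valuation.restrict_le_one_iff]
      exact (O1.valuation_le_one_iff f).mpr (hOS hf)
    have := hsm.monotone this
    rwa [map_one] at this
  · have : u.restrict y < 1 := by
      rwa [Valuation.restrict_lt_one_iff]
    have := hsm this
    rwa [map_one] at this

lemma aux_noeth {K : Type*} [Field K] (B : Subring K) [IsNoetherianRing B] (y : B)
    (hy0 : y ≠ 0) (hyu : ¬ IsUnit y) (halg : ∀ f : K, IsAlgebraic B f) :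
    ∃ v : Valuation K NNReal, (∀ b ∈ B, v b ≤ 1) ∧ v (y : K) < 1 := by
  have hne : Ideal.span {y} ≠ ⊤ := by rwa [Ne, Ideal.span_singleton_eq_top]
  obtain ⟨P, hP⟩ := Ideal.nonempty_minimalPrimes hne
  have hPp : P.IsPrime := hP.isPrime
  have hPh : P.height ≤ 1 := Ideal.height_le_one_of_isPrincipal_of_mem_minimalPrimes _ P hP
  have hyP : y ∈ P := hP.le (Ideal.mem_span_singleton_self y)
  obtain ⟨O, hO, hloc⟩ := (LocalSubring.ofPrime B P).exists_le_valuationSubring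
  have hBO : B ≤ O.toSubring := (LocalSubring.le_ofPrime B P).trans hO
  have hle : ∀ b : B, O.valuation (b : K) ≤ 1 := fun b =>
    (O.valuation_le_one_iff _).mpr (hBO b.2)
  have hy0' : (y : K) ≠ 0 := by simpa using hy0
  have hout : ∀ b : B, b ∉ P → O.valuation (b : K) = 1 := by
    intro b hb
    have hu : IsUnit (algebraMap B (LocalSubring.ofPrime B P).toSubring b) :=
      IsLocalization.map_units (M := P.primeCompl) _ ⟨b, hb⟩
    have hu2 := hu.map (Subring.inclusion hO)
    exact (O.valuation_eq_one_iff ⟨b, hBO b.2⟩).mp hu2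
  have hylt : O.valuation (y : K) < 1 := by
    refine lt_of_le_of_ne (hle y) fun h1 => ?_
    have hu2 : IsUnit (⟨y, hBO y.2⟩ : O) := (O.valuation_eq_one_iff ⟨y, hBO y.2⟩).mpr h1
    have hu : IsUnit (algebraMap B (LocalSubring.ofPrime B P).toSubring y) :=
      hloc.1 _ hu2
    rw [IsLocalization.AtPrime.isUnit_to_map_iff _ P] at hu
    exact hu hyP
  have hwy0 : O.valuation (y : K) ≠ 0 := by simpa using hy0
  let q : Ideal B :=
    { carrier := {b | ∀ n : ℕ, O.valuation (b : K) ≤ O.valuation (y : K) ^ n}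
      zero_mem' := by intro n; simp
      add_mem' := by
        intro a b ha hb n
        exact (O.valuation.map_add _ _).trans (max_le (ha n) (hb n))
      smul_mem' := by
        intro c a ha n
        have : O.valuation ((c • a : B) : K) = O.valuation (c : K) * O.valuation (a : K) := by
          simp
        rw [this]
        calc _ ≤ 1 * O.valuation (y : K) ^ n := by
              gcongr
              · exact hle c
              · exact ha n
          _ = _ := one_mul _ }
  have hqP : q ≤ P := by
    intro b hb
    by_contra hbP
    have := hb 1
    rw [hout b hbP, pow_one] at this
    exact absurd this (not_le.mpr hylt)
  have hyq : y ∉ q := by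
    intro hyq
    have := hyq 2
    rw [pow_two] at this
    have h2 : O.valuation (y : K) * O.valuation (y : K) < O.valuation (y : K) * 1 := by
      gcongr
      exact zero_lt_iff.mpr hwy0
    rw [mul_one] at h2
    exact absurd this (not_le.mpr h2)
  have hqp : q.IsPrime := by
    refine ⟨fun h => hyq (h ▸ trivial), ?_⟩
    intro a b hab
    by_contra hcon
    push Not at hcon
    obtain ⟨ha, hb⟩ := hcon
    have ha' : ∃ n : ℕ, O.valuation (y : K) ^ n < O.valuation (a : K) := by
      by_contra! hc; exact ha hc
    have hb' : ∃ n : ℕ, O.valuation (y : K) ^ n < O.valuation (b : K) := by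
      by_contra! hc; exact hb hc
    obtain ⟨n, hn⟩ := ha'
    obtain ⟨m, hm⟩ := hb'
    have := hab (n + m)
    rw [pow_add] at this
    have h3 : O.valuation ((a * b : B) : K) = O.valuation (a : K) * O.valuation (b : K) := by simp
    rw [h3] at this
    exact absurd this (not_le.mpr (mul_lt_mul'' hn hm zero_le zero_le))
  have hq0 : q = ⊥ := by
    by_contra hq
    have h1 : (⊥ : Ideal B).height < q.height :=
      Ideal.height_strict_mono_of_isPrime (bot_lt_iff_ne_bot.mpr hq)
    have h2 : q.height < P.height :=
      Ideal.height_strict_mono_of_isPrime (lt_of_le_of_ne hqP fun h => hyq (h ▸ hyP))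
    have h3 : q.height < 1 := h2.trans_le hPh
    rw [Order.lt_one_iff] at h3
    rw [h3] at h1
    exact not_lt_bot h1
  have harch : ∀ f : K, f ≠ 0 → ∃ n : ℕ, O.valuation (y : K) ^ n ≤ O.valuation f := by
    intro f hf
    by_cases hfO : f ∈ O
    swap
    · refine ⟨0, ?_⟩
      rw [pow_zero]
      by_contra! hc
      exact hfO ((O.valuation_le_one_iff f).mp hc.le)
    obtain ⟨p, hp0, hpf⟩ := (halg f).exists_nonzero_coeff_and_aeval_eq_zero
      (mem_nonZeroDivisors_of_ne_zero hf)
    have hmemO : ∀ r : Polynomial B, Polynomial.aeval f r ∈ O := by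
      intro r
      rw [Polynomial.aeval_eq_sum_range]
      refine sum_mem fun i _ => ?_
      rw [Algebra.smul_def]
      exact O.mul_mem _ _ (hBO (r.coeff i).2) (pow_mem hfO i)
    have hle1 : O.valuation (p.coeff 0 : K) ≤ O.valuation f := by
      rw [← p.divX_mul_X_add] at hpf
      simp only [map_add, map_mul, Polynomial.aeval_X, Polynomial.aeval_C] at hpf
      have : ((p.coeff 0 : B) : K) = -(Polynomial.aeval f p.divX * f) := by
        rw [eq_neg_iff_add_eq_zero, add_comm]; exact hpf
      rw [this, Valuation.map_neg, map_mul]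
      calc _ ≤ 1 * O.valuation f := by
            gcongr
            exact (O.valuation_le_one_iff _).mpr (hmemO _)
        _ = _ := one_mul _
    have hnq : p.coeff 0 ∉ q := by rw [hq0]; exact hp0
    have : ∃ n : ℕ, O.valuation (y : K) ^ n < O.valuation (p.coeff 0 : K) := by
      by_contra! hc; exact hnq hc
    obtain ⟨n, hn⟩ := this
    exact ⟨n, hn.le.trans hle1⟩
  obtain ⟨v, hv1, hv2⟩ := aux_real O y hy0' hylt harch
  exact ⟨v, fun b hb => hv1 b (hBO hb), hv2⟩

lemma aux_field2 {D K : Type*} [CommRing D] [Field K] [Algebra D K] (R : Subring D)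
    [IsNoetherianRing R] (hint : ∀ d : D, IsIntegral R d)
    (hfr : ∀ k : K, ∃ d d' : D, k = algebraMap D K d / algebraMap D K d')
    (O : ValuationSubring K) (hDO : ∀ d : D, algebraMap D K d ∈ O)
    (y z : K) (hy0 : y ≠ 0) (hyO : y ∈ O.nonunits) (hzO : z ∈ O) :
    ∃ v : Valuation K NNReal, (∀ d : D, v (algebraMap D K d) ≤ 1) ∧ v y < 1 ∧ v z ≤ 1 := by
  let E : Subalgebra R K := Algebra.adjoin R {y, z}
  have hE : IsNoetherianRing E := by
    have : Algebra.FiniteType R E := by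
      rw [← Subalgebra.fg_iff_finiteType]
      exact Subalgebra.fg_def.mpr ⟨{y, z}, by simp, rfl⟩
    exact Algebra.FiniteType.isNoetherianRing R E
  let B : Subring K := E.toSubring
  have hB : IsNoetherianRing B := hE
  have hyB : y ∈ B := Algebra.subset_adjoin (by simp)
  have hzB : z ∈ B := Algebra.subset_adjoin (by simp)
  have hRB : ∀ r : R, algebraMap D K r ∈ B := fun r => E.algebraMap_mem r
  have hBO : B ≤ O.toSubring := by
    intro b hb
    refine Algebra.adjoin_induction (p := fun b _ => b ∈ O) ?_ ?_ ?_ ?_ hb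
    · rintro a (rfl | rfl)
      · exact O.nonunits_subset hyO
      · exact hzO
    · exact fun r => hDO r
    · exact fun a b _ _ ha hb => O.add_mem _ _ ha hb
    · exact fun a b _ _ ha hb => O.mul_mem _ _ ha hb
  have hintB : ∀ d : D, IsIntegral B (algebraMap D K d) := by
    intro d
    have h1 : IsIntegral R (algebraMap D K d) := (hint d).map (Algebra.ofId D K |>.restrictScalars R)
    have h2 : IsIntegral E (algebraMap D K d) := h1.tower_top
    exact h2
  obtain ⟨v, hv, hvy⟩ := aux_noeth B ⟨y, hyB⟩ (by simpa using hy0) (by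
      intro hu
      have hu2 : IsUnit (⟨y, hBO hyB⟩ : O) := hu.map (Subring.inclusion hBO)
      rw [O.valuation_eq_one_iff] at hu2
      exact (O.mem_nonunits_iff.mp hyO).ne hu2) (by
      intro f
      obtain ⟨d, d', rfl⟩ := hfr f
      rw [div_eq_mul_inv]
      exact (hintB d).isAlgebraic.mul (hintB d').isAlgebraic.inv)
  refine ⟨v, fun d => ?_, hvy, hv z hzB⟩
  obtain ⟨p, hp, hpd⟩ := hintB d
  have : algebraMap D K d ∈ v.integer := by
    have h3 : IsIntegral v.integer (algebraMap D K d) := by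
      refine ⟨p.map (Subring.inclusion (show B ≤ v.integer from hv)), hp.map _, ?_⟩
      rw [Polynomial.eval₂_map]
      exact hpd
    exact (Valuation.integer.integers v).mem_of_integral h3
  exact this

lemma aux_int {D K : Type*} [CommRing D] [Field K] [Algebra D K] {x : K} (p : Polynomial D)
    (H : IsUnit p.leadingCoeff) (hp : Polynomial.aeval x p = 0) : IsIntegral D x := by
  obtain ⟨c, hc⟩ := H.exists_left_inv
  have hm : (Polynomial.C c * p).Monic := Polynomial.monic_C_mul_of_mul_leadingCoeff_eq_one hc
  refine ⟨Polynomial.C c * p, hm, ?_⟩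
  rw [← Polynomial.aeval_def, map_mul, hp, mul_zero]

set_option maxHeartbeats 1000000 in
lemma aux_field_s10 {D K : Type*} [CommRing D] [Field K] [Algebra D K] (R : Subring D)
    [IsNoetherianRing R] (hint : ∀ d : D, IsIntegral R d)
    (hfr : ∀ k : K, ∃ d d' : D, k = algebraMap D K d / algebraMap D K d')
    (t : D) (htJac : t ∈ (⊥ : Ideal D).jacobson) (ht0 : algebraMap D K t ≠ 0)
    (x : K) (hx : ¬ IsIntegral D x) :
    ∃ v : Valuation K NNReal, (∀ d : D, v (algebraMap D K d) ≤ 1) ∧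
      v (algebraMap D K t) < 1 ∧ 1 < v x := by
  have hx0 : x ≠ 0 := by rintro rfl; exact hx isIntegral_zero
  have hx0' : x⁻¹ ≠ 0 := inv_ne_zero hx0
  let _ : Invertible x⁻¹ := invertibleOfNonzero hx0'
  have hunit : ∀ a : D, a - 1 ∈ Ideal.span {t} → IsUnit a := by
    intro a ha
    obtain ⟨c, hc⟩ := Ideal.mem_span_singleton'.mp ha
    have := Ideal.mem_jacobson_bot.mp htJac c
    rwa [show t * c + 1 = a by rw [mul_comm, hc]; ring] at this
  have htop : Ideal.span {t} ≠ ⊤ := by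
    intro h
    have h0 : IsUnit (0 : D) := hunit 0 (by rw [h]; trivial)
    rw [isUnit_zero_iff] at h0
    have := congrArg (algebraMap D K) h0
    simp at this
  have hI : (Ideal.span {t}).map (algebraMap D (Algebra.adjoin D {x⁻¹})) ⊔
      .span {⟨x⁻¹, Algebra.subset_adjoin rfl⟩} ≠ ⊤ := by
    intro eq
    obtain ⟨p, hp, hpx⟩ :=
      Algebra.exists_aeval_invOf_eq_zero_of_idealMap_adjoin_sup_span_eq_top _ _ htop eq
    have H := hunit _ hp
    have hxx : ⅟(x⁻¹) = x := by rw [invOf_eq_inv, inv_inv]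
    rw [hxx] at hpx
    exact hx (aux_int p H hpx)
  obtain ⟨O, hO, hnu⟩ := Ideal.image_subset_nonunits_valuationSubring
    (A := (Algebra.adjoin D {x⁻¹}).toSubring) _ hI
  have hDO : ∀ d : D, algebraMap D K d ∈ O := fun d =>
    hO ((Algebra.adjoin D {x⁻¹}).algebraMap_mem d)
  have hxO : x⁻¹ ∈ O.nonunits :=
    hnu ⟨_, Ideal.mem_sup_right (Ideal.subset_span rfl), rfl⟩
  have htO : algebraMap D K t ∈ O.nonunits :=
    hnu ⟨_, Ideal.mem_sup_left (Ideal.mem_map_of_mem _ (Ideal.mem_span_singleton_self t)), rfl⟩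
  rcases O.mem_or_inv_mem (algebraMap D K t * x) with hz | hz
  · obtain ⟨v, hv, hvy, hvz⟩ := aux_field2 R hint hfr O hDO x⁻¹ _ hx0' hxO hz
    refine ⟨v, hv, ?_, ?_⟩
    · calc v (algebraMap D K t) = v (algebraMap D K t * x) * v x⁻¹ := by
            rw [← map_mul, mul_assoc, mul_inv_cancel₀ hx0, mul_one]
        _ ≤ 1 * v x⁻¹ := by gcongr
        _ < 1 := by rwa [one_mul]
    · rw [map_inv₀] at hvy
      exact (inv_lt_one₀ (zero_lt_iff.mpr (by simpa using hx0))).mp hvy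
  · obtain ⟨v, hv, hvy, hvz⟩ := aux_field2 R hint hfr O hDO (algebraMap D K t) _ ht0 htO hz
    refine ⟨v, hv, hvy, ?_⟩
    have : v x⁻¹ < 1 := by
      calc v x⁻¹ = v (algebraMap D K t * x)⁻¹ * v (algebraMap D K t) := by
            rw [← map_mul]; congr 1; field_simp
        _ ≤ 1 * v (algebraMap D K t) := by gcongr
        _ < 1 := by rwa [one_mul]
    rw [map_inv₀] at this
    exact (inv_lt_one₀ (zero_lt_iff.mpr (by simpa using hx0))).mp this

/-- Let `D` be a ring containing a Noetherian subring over which it is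
integral, let `t ∈ D` be a nonzero divisor contained in the Jacobson radical of `D`, suppose
`D` is integrally closed in `D[1/t]`, and let `g ∈ D` be a nonzero divisor.  Then the integral
closure of `D` in `D[1/(tg)]` equals the set of `x ∈ D[1/(tg)]` with `v x ≤ 1` for every
rank-`≤1` semivaluation `v` on `D[1/(tg)]` with `v d ≤ 1` for all `d ∈ D` and `v t < 1`. -/
theorem integralClosure_eq_le_one_of_semivaluations
    (D : Type*) [CommRing D]
    (hNoeth : ∃ R : Subring D, IsNoetherianRing ↥R ∧ ∀ x : D, IsIntegral ↥R x)
    (t : D) (ht : t ∈ nonZeroDivisors D) (htJac : t ∈ (⊥ : Ideal D).jacobson)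
    (hIC : ∀ x : Localization.Away t, IsIntegral D x → x ∈ (algebraMap D (Localization.Away t)).range)
    (g : D) (hg : g ∈ nonZeroDivisors D) :
    (integralClosure D (Localization.Away (t * g)) : Set (Localization.Away (t * g)))
      = {x : Localization.Away (t * g) |
            ∀ v : Valuation (Localization.Away (t * g)) NNReal,
              (∀ d : D, v (algebraMap D (Localization.Away (t * g)) d) ≤ 1) →
              v (algebraMap D (Localization.Away (t * g)) t) < 1 →
              v x ≤ 1} := by
  obtain ⟨R, hR, hint⟩ := hNoeth
  ext x
  simp only [SetLike.mem_coe, Set.mem_ofPred_eq]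
  constructor
  · rintro ⟨p, hp, hpx⟩ v hv -
    let f : D →+* v.integer := (algebraMap D (Localization.Away (t * g))).codRestrict v.integer hv
    have h3 : IsIntegral v.integer x := by
      refine ⟨p.map f, hp.map _, ?_⟩
      rw [Polynomial.eval₂_map]
      exact hpx
    exact (Valuation.integer.integers v).mem_of_integral h3
  · intro hx
    by_contra hxi
    have hxi' : ¬ IsIntegral D x := hxi
    let M : Submonoid (Localization.Away (t * g)) :=
      { carrier := {c | ∃ p : Polynomial D, p.Monic ∧ Polynomial.aeval x p = c}
        one_mem' := ⟨1, Polynomial.monic_one, by simp⟩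
        mul_mem' := by
          rintro _ _ ⟨p, hp, rfl⟩ ⟨q, hq, rfl⟩
          exact ⟨p * q, hp.mul hq, by simp⟩ }
    obtain ⟨Q, hQ, -, hdis⟩ := Ideal.exists_le_prime_disjoint (⊥ : Ideal (Localization.Away (t * g))) M
      (by
        rw [Set.disjoint_left]
        rintro a ha ⟨p, hp, hpa⟩
        have ha0 : a = 0 := ha
        exact hxi' ⟨p, hp, hpa.trans ha0⟩)
    let K := FractionRing (Localization.Away (t * g) ⧸ Q)
    let φ : Localization.Away (t * g) →ₐ[D] K :=
      (IsScalarTower.toAlgHom D (Localization.Away (t * g) ⧸ Q) K).comp (Ideal.Quotient.mkₐ D Q)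
    have hφ0 : ∀ c, φ c = 0 → c ∈ Q := by
      intro c hc
      have : algebraMap (Localization.Away (t * g) ⧸ Q) K (Ideal.Quotient.mk Q c) = 0 := hc
      rw [FaithfulSMul.algebraMap_eq_zero_iff] at this
      exact Ideal.Quotient.eq_zero_iff_mem.mp this
    have hφx : ¬ IsIntegral D (φ x) := by
      rintro ⟨p, hp, hpx⟩
      have h1 : Polynomial.aeval (φ x) p = 0 := hpx
      rw [Polynomial.aeval_algHom_apply] at h1
      exact Set.disjoint_left.mp hdis (hφ0 _ h1) ⟨p, hp, rfl⟩
    have htg : IsUnit (algebraMap D (Localization.Away (t * g)) (t * g)) :=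
      IsLocalization.Away.algebraMap_isUnit (t * g)
    have htg0 : algebraMap D K (t * g) ≠ 0 := by
      rw [← φ.commutes]
      exact (htg.map φ).ne_zero
    have ht0 : algebraMap D K t ≠ 0 := by
      intro h; apply htg0; rw [map_mul, h, zero_mul]
    have hφfr : ∀ c, ∃ (d : D) (n : ℕ), φ c * algebraMap D K (t * g) ^ n = algebraMap D K d := by
      intro c
      obtain ⟨n, d, hd⟩ := IsLocalization.Away.surj (t * g) c
      refine ⟨d, n, ?_⟩
      rw [← φ.commutes, ← φ.commutes, ← hd, map_mul φ, map_pow φ]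
    have hfr : ∀ k : K, ∃ d d' : D, k = algebraMap D K d / algebraMap D K d' := by
      intro k
      obtain ⟨a, b, hb, rfl⟩ := IsFractionRing.div_surjective (A := Localization.Away (t * g) ⧸ Q) k
      obtain ⟨a, rfl⟩ := Ideal.Quotient.mk_surjective a
      obtain ⟨b, rfl⟩ := Ideal.Quotient.mk_surjective b
      obtain ⟨d, n, hd⟩ := hφfr a
      obtain ⟨e, m, he⟩ := hφfr b
      have hb0 : φ b ≠ 0 := by
        have := IsFractionRing.to_map_ne_zero_of_mem_nonZeroDivisors (K := K) hb
        exact this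
      refine ⟨d * (t * g) ^ m, e * (t * g) ^ n, ?_⟩
      change φ a / φ b = _
      rw [map_mul _ d, map_mul _ e, map_pow _ (t * g), map_pow _ (t * g), ← hd, ← he,
        div_eq_div_iff hb0 (mul_ne_zero (mul_ne_zero hb0 (pow_ne_zero _ htg0))
          (pow_ne_zero _ htg0))]
      ring
    obtain ⟨v, hv1, hv2, hv3⟩ := aux_field_s10 R hint hfr t htJac ht0 (φ x) hφx
    have := hx (v.comap φ.toRingHom) (fun d => by
      change v (φ _) ≤ 1
      rw [φ.commutes]; exact hv1 d) (by
      change v (φ _) < 1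
      rw [φ.commutes]; exact hv2)
    exact absurd this (not_le.mpr hv3)
end

section
/- Let A be a ring with a nonzero divisor t ∈ A such that A is completely integrally closed in A[1/t], and fix a prime p. Suppose A admits a compatible system of p-power roots t^{1/p^n} ∈ A of t. Then the subring t^{−1/p^∞}A := {b ∈ A[1/t] : t^{1/p^n}·b ∈ A for all n > 0} of A[1/t] is equal to (the image of) A; in particular t^{−1/p^∞}A is completely integrally closed in A[1/t]. -/
/-- An element `x` of an `R`-algebra `B` is almost integral over `R` if all its powers lie in a
single finitely generated `R`-submodule of `B`. -/
def IsAlmostIntegralElem (R : Type*) {B : Type*} [CommRing R] [CommRing B] [Algebra R B]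
    (x : B) : Prop :=
  ∃ M : Submodule R B, M.FG ∧ ∀ n : ℕ, x ^ n ∈ M

/-- `R` is completely integrally closed in the `R`-algebra `B` if every element of `B` that is
almost integral over `R` lies in the image of `R`. -/
def IsCompletelyIntegrallyClosedIn (R B : Type*) [CommRing R] [CommRing B] [Algebra R B] : Prop :=
  ∀ x : B, IsAlmostIntegralElem R x → x ∈ (algebraMap R B).range

/-- Let `A` be a ring with a nonzero divisor `t` such that `A` is completely
integrally closed in `A[1/t]`, and fix a prime `p`.  Suppose `A` admits a compatible system of
`p`-power roots `t^{1/p^n} ∈ A` of `t`.  Then the subring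
`t^{-1/p^∞}A = {b ∈ A[1/t] : t^{1/p^n}·b ∈ A for all n > 0}` of `A[1/t]` equals the image of
`A`. -/
theorem almostElements_eq_self_of_completelyIntegrallyClosed
    (A : Type*) [CommRing A] (t : A) (ht : t ∈ nonZeroDivisors A)
    (p : ℕ) (hp : p.Prime)
    (tr : ℕ → A) (htr0 : tr 0 = t) (htr : ∀ n, tr (n + 1) ^ p = tr n)
    (At : Type*) [CommRing At] [Algebra A At] [IsLocalization.Away t At]
    (hcic : IsCompletelyIntegrallyClosedIn A At) :
    {b : At | ∀ n : ℕ, 0 < n → algebraMap A At (tr n) * b ∈ (algebraMap A At).range}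
      = Set.range (algebraMap A At) := by
  have hpow : ∀ n, tr n ^ (p ^ n) = t := by
    intro n
    induction n with
    | zero => simpa using htr0
    | succ k ih => rw [pow_succ', pow_mul, htr, ih]
  ext b
  constructor
  · intro hb
    have hb' : ∀ n : ℕ, 0 < n → algebraMap A At (tr n) * b ∈ (algebraMap A At).range := hb
    have key : IsAlmostIntegralElem A b := by
      refine ⟨Submodule.span A {IsLocalization.Away.invSelf t}, Submodule.fg_span_singleton _, ?_⟩
      intro m
      obtain ⟨a, ha⟩ := hb' (m + 1) (Nat.succ_pos m)
      have hle : m ≤ p ^ (m + 1) :=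
        (Nat.le_succ m).trans (Nat.lt_pow_self hp.one_lt).le
      have h1 : algebraMap A At t * b ^ m
          = algebraMap A At (tr (m + 1) ^ (p ^ (m + 1) - m) * a ^ m) := by
        rw [map_mul, map_pow, map_pow, ha, mul_pow, ← mul_assoc, ← pow_add,
          Nat.sub_add_cancel hle, ← map_pow, hpow]
      rw [Submodule.mem_span_singleton]
      refine ⟨tr (m + 1) ^ (p ^ (m + 1) - m) * a ^ m, ?_⟩
      rw [Algebra.smul_def, ← h1, mul_right_comm, IsLocalization.Away.mul_invSelf, one_mul]
    exact hcic b key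
  · rintro ⟨a, rfl⟩ n _
    exact ⟨tr n * a, map_mul _ _ _⟩
end

section
/- Let A be a ring with an element t ∈ A, let Λ be a directed poset, and let {A_λ}_{λ∈Λ} be an inverse system of A-algebras. Suppose that each A_λ is t-torsion free and completely integrally closed in A_λ[1/t]. Then the inverse limit lim_λ A_λ is a t-torsion free A-algebra and is completely integrally closed in (lim_λ A_λ)[1/t]. -/
/-- The inverse limit of an inverse system of rings, realized as the subring of compatible
families in the product. -/
def invLimitSubring {Λ : Type*} [Preorder Λ] (Aι : Λ → Type*) [∀ l, CommRing (Aι l)]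
    (f : ∀ i j : Λ, i ≤ j → (Aι j →+* Aι i)) : Subring (∀ l, Aι l) where
  carrier := {x | ∀ (i j : Λ) (h : i ≤ j), f i j h (x j) = x i}
  zero_mem' := fun i j h => by simp
  one_mem' := fun i j h => by simp
  add_mem' := fun {a b} ha hb i j h => by
    simp only [Pi.add_apply, map_add, ha i j h, hb i j h]
  mul_mem' := fun {a b} ha hb i j h => by
    simp only [Pi.mul_apply, map_mul, ha i j h, hb i j h]
  neg_mem' := fun {a} ha i j h => by
    simp only [Pi.neg_apply, map_neg, ha i j h]

theorem IsAlmostIntegralElem.map_aux {R B R' B' : Type*} [CommRing R] [CommRing B] [Algebra R B]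
    [CommRing R'] [CommRing B'] [Algebra R' B'] (g : R →+* R') (φ : B →+* B')
    (h : ∀ r, φ (algebraMap R B r) = algebraMap R' B' (g r)) {x : B}
    (hx : IsAlmostIntegralElem R x) : IsAlmostIntegralElem R' (φ x) := by
  obtain ⟨M, ⟨S, hS⟩, hM⟩ := hx
  refine ⟨Submodule.span R' (φ '' (S : Set B)),
    Submodule.fg_span (S.finite_toSet.image _), fun n => ?_⟩
  have key : ∀ y ∈ Submodule.span R (S : Set B),
      φ y ∈ Submodule.span R' (φ '' (S : Set B)) := by
    intro y hy
    induction hy using Submodule.span_induction with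
    | mem y hy => exact Submodule.subset_span ⟨y, hy, rfl⟩
    | zero => simp
    | add a b _ _ ha hb => rw [map_add]; exact add_mem ha hb
    | smul r a _ ha =>
      rw [Algebra.smul_def, map_mul, h, ← Algebra.smul_def]
      exact Submodule.smul_mem _ _ ha
  rw [← map_pow]
  exact key _ (hS ▸ hM n)

/-- Let `A` be a ring with an element `t`, `Λ` a directed poset, and
`{A_λ}` an inverse system of `A`-algebras.  If each `A_λ` is `t`-torsion free and completely
integrally closed in `A_λ[1/t]`, then the inverse limit is a `t`-torsion free `A`-algebra
(the image of `t` in it is a nonzero divisor) and is completely integrally closed in its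
localization away from `t`. -/
theorem invLimit_completelyIntegrallyClosed
    (A : Type*) [CommRing A] (t : A)
    (Λ : Type*) [PartialOrder Λ] [IsDirected Λ (· ≤ ·)]
    (Aι : Λ → Type*) [∀ l, CommRing (Aι l)] [∀ l, Algebra A (Aι l)]
    (f : ∀ i j : Λ, i ≤ j → (Aι j →+* Aι i))
    (hf_id : ∀ i, f i i le_rfl = RingHom.id (Aι i))
    (hf_comp : ∀ (i j k : Λ) (hij : i ≤ j) (hjk : j ≤ k),
        (f i j hij).comp (f j k hjk) = f i k (hij.trans hjk))
    (hf_alg : ∀ (i j : Λ) (h : i ≤ j) (a : A),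
        f i j h (algebraMap A (Aι j) a) = algebraMap A (Aι i) a)
    (htf : ∀ l, algebraMap A (Aι l) t ∈ nonZeroDivisors (Aι l))
    (hcic : ∀ l, IsCompletelyIntegrallyClosedIn (Aι l)
        (Localization.Away (algebraMap A (Aι l) t))) :
    ∃ htL : (fun l => algebraMap A (Aι l) t) ∈ invLimitSubring Aι f,
      (⟨fun l => algebraMap A (Aι l) t, htL⟩ : ↥(invLimitSubring Aι f))
          ∈ nonZeroDivisors ↥(invLimitSubring Aι f) ∧
      IsCompletelyIntegrallyClosedIn ↥(invLimitSubring Aι f)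
        (Localization.Away
          (⟨fun l => algebraMap A (Aι l) t, htL⟩ : ↥(invLimitSubring Aι f))) := by
  have htL : (fun l => algebraMap A (Aι l) t) ∈ invLimitSubring Aι f :=
    fun i j h => hf_alg i j h t
  refine ⟨htL, ?_, ?_⟩
  · rw [mem_nonZeroDivisors_iff_right]
    intro z hz
    ext l
    have h1 := congrFun (congrArg Subtype.val hz) l
    exact (mem_nonZeroDivisors_iff_right.mp (htf l)) _ h1
  · generalize hT : (⟨fun l => algebraMap A (Aι l) t, htL⟩ : ↥(invLimitSubring Aι f)) = T
    have hTl : ∀ l, T.1 l = algebraMap A (Aι l) t := fun l => by rw [← hT]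
    intro x hx
    obtain ⟨⟨s, ⟨_, k, rfl⟩⟩, hs⟩ := IsLocalization.surj (Submonoid.powers T) x
    simp only at hs
    have main : ∀ l, ∃ a : Aι l, a * (algebraMap A (Aι l) t) ^ k = s.1 l := by
      intro l
      let g : ↥(invLimitSubring Aι f) →+* Aι l :=
        (Pi.evalRingHom Aι l).comp (invLimitSubring Aι f).subtype
      have hg : ∀ z, g z = z.1 l := fun z => rfl
      have hu : IsUnit (((algebraMap (Aι l) (Localization.Away (algebraMap A (Aι l) t))).comp g)
          T) := by
        rw [RingHom.comp_apply, hg, hTl]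
        exact IsLocalization.Away.algebraMap_isUnit _
      let φ : Localization.Away T →+* Localization.Away (algebraMap A (Aι l) t) :=
        IsLocalization.Away.lift T hu
      have hφ : ∀ r, φ (algebraMap _ _ r) = algebraMap _ _ (g r) := fun r =>
        IsLocalization.Away.lift_eq T hu r
      obtain ⟨a, ha⟩ := hcic l _ (IsAlmostIntegralElem.map_aux g φ hφ hx)
      refine ⟨a, ?_⟩
      have hinj := IsLocalization.injective (Localization.Away (algebraMap A (Aι l) t))
        (M := Submonoid.powers (algebraMap A (Aι l) t))
        (Submonoid.powers_le.mpr (htf l))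
      apply hinj
      have h2 := congrArg φ hs
      rw [map_mul, hφ, hφ, ← ha, ← map_mul, map_pow, hg, hg, hTl] at h2
      exact h2
    choose a ha using main
    have hmem : a ∈ invLimitSubring Aι f := by
      intro i j h
      have hn := pow_mem (htf i) k
      refine (mul_cancel_right_mem_nonZeroDivisors hn).mp ?_
      rw [ha i, ← s.2 i j h, ← ha j, map_mul, map_pow, hf_alg]
    refine ⟨⟨a, hmem⟩, ?_⟩
    have hu : IsUnit (algebraMap _ (Localization.Away T) (T ^ k)) := by
      rw [map_pow]
      exact (IsLocalization.Away.algebraMap_isUnit T).pow k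
    refine hu.mul_right_cancel ?_
    refine Eq.trans ?_ hs.symm
    rw [← map_mul]
    congr 1
    ext l
    rw [← ha l, ← hTl]
    rfl
end

section
/- Let A ⊆ B be a ring extension such that A is completely integrally closed in B, and fix a prime p. Suppose t ∈ A is an element such that B is t-torsion free and A admits a compatible system of p-power roots t^{1/p^n} ∈ A of t. Define, inside B[1/t], the subrings t^{−1/p^∞}A := {x ∈ A[1/t] : t^{1/p^n}·x ∈ A for all n > 0} and t^{−1/p^∞}B := {x ∈ B[1/t] : t^{1/p^n}·x ∈ B for all n > 0}. Then t^{−1/p^∞}A is completely integrally closed in t^{−1/p^∞}B. -/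
/-- For subsets `S ⊆ T` of a commutative ring, `x` is almost integral over `S` (relative to the
ambient subring `T`) if all powers of `x` lie in a finitely generated `S`-submodule of `T`,
i.e. there is a finite set `s ⊆ T` such that every power of `x` is an `S`-linear combination of
the elements of `s`. -/
def AlmostIntegralOverSet {C : Type*} [CommRing C] (S T : Set C) (x : C) : Prop :=
  ∃ s : Finset C, (↑s : Set C) ⊆ T ∧
    ∀ n : ℕ, ∃ c : C → C, (∀ y ∈ s, c y ∈ S) ∧ x ^ n = ∑ y ∈ s, c y * y

/-- Let `A ⊆ B` with `A` completely integrally closed in `B`, let `t ∈ A` be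
such that `B` is `t`-torsion free, and suppose `A` has a compatible system of `p`-power roots of
`t`.  Then, inside `B[1/t]`, the ring `t^{-1/p^∞}A = {x ∈ A[1/t] : t^{1/p^n}·x ∈ A, ∀n>0}` is
completely integrally closed in `t^{-1/p^∞}B = {x ∈ B[1/t] : t^{1/p^n}·x ∈ B, ∀n>0}`. -/
theorem almostElements_completelyIntegrallyClosed
    (A B : Type*) [CommRing A] [CommRing B] [Algebra A B]
    (hinj : Function.Injective (algebraMap A B))
    (hcic : IsCompletelyIntegrallyClosedIn A B)
    (p : ℕ) (hp : p.Prime)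
    (t : A) (htf : algebraMap A B t ∈ nonZeroDivisors B)
    (tr : ℕ → A) (htr0 : tr 0 = t) (htr : ∀ n, tr (n + 1) ^ p = tr n)
    (Bt : Type*) [CommRing Bt] [Algebra B Bt] [IsLocalization.Away (algebraMap A B t) Bt]
    [Algebra A Bt] [IsScalarTower A B Bt] :
    ∀ x ∈ {x : Bt | ∀ n : ℕ, 0 < n →
              algebraMap A Bt (tr n) * x ∈ (algebraMap B Bt).range},
      AlmostIntegralOverSet
        {x : Bt | (∃ (a : A) (k : ℕ), algebraMap A Bt t ^ k * x = algebraMap A Bt a) ∧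
            ∀ n : ℕ, 0 < n → algebraMap A Bt (tr n) * x ∈ (algebraMap A Bt).range}
        {x : Bt | ∀ n : ℕ, 0 < n → algebraMap A Bt (tr n) * x ∈ (algebraMap B Bt).range}
        x →
      x ∈ {x : Bt | (∃ (a : A) (k : ℕ), algebraMap A Bt t ^ k * x = algebraMap A Bt a) ∧
            ∀ n : ℕ, 0 < n → algebraMap A Bt (tr n) * x ∈ (algebraMap A Bt).range} := by
  classical
  intro x hx hai
  obtain ⟨s, hsT, hs⟩ := hai
  have hBinj : Function.Injective (algebraMap B Bt) :=
    IsLocalization.injective Bt (M := Submonoid.powers (algebraMap A B t))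
      (Submonoid.powers_le.mpr htf)
  have key : ∀ n : ℕ, 0 < n → algebraMap A Bt (tr n) * x ∈ (algebraMap A Bt).range := by
    intro n hn
    obtain ⟨b, hb⟩ := hx n hn
    have hg : ∀ y : Bt, ∃ b' : B, y ∈ s → algebraMap B Bt b' = algebraMap A Bt (tr n) * y := by
      intro y
      by_cases hy : y ∈ s
      · obtain ⟨b', hb'⟩ := hsT hy n hn
        exact ⟨b', fun _ => hb'⟩
      · exact ⟨0, fun h => absurd h hy⟩
    choose g hg using hg
    have hbA : b ∈ (algebraMap A B).range := by
      apply hcic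
      refine ⟨Submodule.span A (↑(insert 1 (insert b (s.image g)) : Finset B) : Set B),
        ⟨_, rfl⟩, ?_⟩
      intro m
      rcases m with _ | _ | m
      · rw [pow_zero]
        exact Submodule.subset_span (by simp)
      · rw [zero_add, pow_one]
        exact Submodule.subset_span (by simp)
      · obtain ⟨c, hc, hsum⟩ := hs (m + 1 + 1)
        have hd : ∀ y : Bt, ∃ a : A, y ∈ s →
            algebraMap A Bt a = algebraMap A Bt (tr n) * c y := by
          intro y
          by_cases hy : y ∈ s
          · obtain ⟨a, ha⟩ := (hc y hy).2 n hn
            exact ⟨a, fun _ => ha⟩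
          · exact ⟨0, fun h => absurd h hy⟩
        choose d hd using hd
        have e : b ^ (m + 1 + 1) = ∑ y ∈ s, (tr n ^ m * d y) • g y := by
          apply hBinj
          rw [map_pow, hb, mul_pow, hsum, map_sum, Finset.mul_sum]
          refine Finset.sum_congr rfl fun y hy => ?_
          rw [Algebra.smul_def, map_mul, ← IsScalarTower.algebraMap_apply, hg y hy, map_mul,
            hd y hy, map_pow]
          ring
        rw [e]
        refine Submodule.sum_mem _ fun y hy => Submodule.smul_mem _ _ (Submodule.subset_span ?_)
        simp only [Finset.coe_insert, Finset.coe_image]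
        exact Or.inr (Or.inr ⟨y, hy, rfl⟩)
    obtain ⟨a, ha⟩ := hbA
    exact ⟨a, by rw [IsScalarTower.algebraMap_apply A B Bt, ha, hb]⟩
  refine ⟨?_, key⟩
  obtain ⟨a, ha⟩ := key 1 one_pos
  refine ⟨tr 1 ^ (p - 1) * a, 1, ?_⟩
  have h1 : t = tr 1 ^ (p - 1) * tr 1 := by
    rw [← pow_succ, Nat.sub_add_cancel hp.one_le, ← htr0, ← htr 0]
  rw [pow_one, map_mul, ha, ← mul_assoc, ← map_mul, ← h1]
end

section
/- Let R be a Noetherian domain that is integrally closed in its field of fractions, let R^+ be the absolute integral closure of R, and let A be a ring with R ⊆ A ⊆ R^+. Then A is integrally closed in Frac(A) if and only if A is completely integrally closed in Frac(A). -/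
open Polynomial in
/-- Elements of `L` with a common `R`-denominator for all powers, up to integral elements. -/
def almostIntSubring (R L : Type*) [CommRing R] [IsDomain R] [CommRing L] [Algebra R L] :
    Subring L where
  carrier := { s | ∃ r : R, r ≠ 0 ∧ ∀ n : ℕ, IsIntegral R (r • s ^ n) }
  mul_mem' := by
    rintro a b ⟨r, hr, hr'⟩ ⟨s, hs, hs'⟩
    refine ⟨r * s, mul_ne_zero hr hs, fun n ↦ ?_⟩
    rw [mul_pow, mul_smul_mul_comm]
    exact (hr' _).mul (hs' _)
  one_mem' := ⟨1, one_ne_zero, fun n ↦ by simpa using isIntegral_one⟩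
  add_mem' := by
    rintro a b ⟨r, hr, hr'⟩ ⟨s, hs, hs'⟩
    refine ⟨r * s, mul_ne_zero hr hs, fun n ↦ ?_⟩
    simp only [add_pow, Finset.smul_sum, ← smul_mul_assoc _ (_ * _),
      ← smul_mul_smul_comm _ (a ^ _)]
    refine IsIntegral.sum _ fun i _ ↦ ((hr' _).mul (hs' _)).mul ?_
    exact map_natCast (algebraMap R L) (n.choose i) ▸ isIntegral_algebraMap
  zero_mem' := ⟨1, one_ne_zero, fun n ↦ by
    rw [one_smul]; exact isIntegral_zero.pow n⟩
  neg_mem' := by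
    rintro a ⟨r, hr, hr'⟩
    refine ⟨r, hr, fun n ↦ ?_⟩
    rw [neg_pow, mul_comm, ← smul_mul_assoc]
    exact (hr' n).mul (isIntegral_one.neg.pow n)

open Polynomial in
theorem isIntegral_of_mem_almostIntSubring (R K L : Type*) [CommRing R] [IsDomain R]
    [IsNoetherianRing R] [IsIntegrallyClosed R] [Field K] [Field L] [Algebra R K] [Algebra K L]
    [Algebra R L] [IsScalarTower R K L] [IsFractionRing R K] [IsAlgClosed L]
    [Normal K L]
    {x : L} (hx : x ∈ almostIntSubring R L) : IsIntegral R x := by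
  have hxK : IsIntegral K x := Algebra.IsIntegral.isIntegral x
  have hlift : (minpoly K x).map (algebraMap K L) ∈
      Polynomial.lifts (almostIntSubring R L).subtype := by
    refine (IsAlgClosed.splits _).mem_lift_of_roots_mem_range ((minpoly.monic hxK).map _) _ ?_
    intro y hy
    have hy' : aeval y (minpoly K x) = 0 := by
      have := (mem_roots'.1 hy).2
      simpa [IsRoot, eval_map_algebraMap] using this
    obtain ⟨σ, hσ⟩ := minpoly.exists_algEquiv_of_root' hxK.isAlgebraic hy'
    obtain ⟨r, hr, h⟩ := hx
    refine ⟨⟨y, r, hr, fun n ↦ ?_⟩, rfl⟩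
    have := (h n).map (σ.toAlgHom.restrictScalars R)
    simpa [hσ] using this
  have hcoeff : ∀ n, (minpoly K x).coeff n ∈ (algebraMap R K).range := by
    intro n
    obtain ⟨⟨z, r, hr, hz⟩, hzz⟩ := (lifts_iff_coeff_lifts _).1 hlift n
    simp only [Subring.subtype_apply, coeff_map] at hzz
    subst hzz
    have : IsAlmostIntegral R ((minpoly K x).coeff n) := by
      refine ⟨r, mem_nonZeroDivisors_of_ne_zero hr, fun m ↦ ?_⟩
      have h1 : IsIntegral R (r • (minpoly K x).coeff n ^ m) := by
        rw [← isIntegral_algHom_iff (IsScalarTower.toAlgHom R K L) (algebraMap K L).injective]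
        simpa using hz m
      exact IsIntegrallyClosed.isIntegral_iff.1 h1
    exact IsIntegrallyClosed.isIntegral_iff.1 (isAlmostIntegral_iff_isIntegral.1 this)
  have h2 : minpoly K x ∈ lifts (algebraMap R K) := (lifts_iff_coeff_lifts _).2 hcoeff
  obtain ⟨q, hq, -, hqm⟩ := lifts_and_degree_eq_and_monic h2 (minpoly.monic hxK)
  refine ⟨q, hqm, ?_⟩
  have := minpoly.aeval K x
  rw [← hq, aeval_map_algebraMap] at this
  exact this

/-- Let `R` be a Noetherian integrally closed domain with absolute integral
closure `R⁺` (the integral closure of `R` in a fixed algebraic closure of `Frac R`), and let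
`A` be a ring with `R ⊆ A ⊆ R⁺`.  Then `A` is integrally closed in `Frac A` iff it is
completely integrally closed in `Frac A`. -/
theorem integrallyClosed_iff_completelyIntegrallyClosed_of_subring_absoluteIntegralClosure
    (R : Type*) [CommRing R] [IsDomain R] [IsNoetherianRing R] [IsIntegrallyClosed R]
    (A : Subring (AlgebraicClosure (FractionRing R)))
    (hRA : (algebraMap R (AlgebraicClosure (FractionRing R))).range ≤ A)
    (hAplus : ∀ x ∈ A, IsIntegral R x) :
    IsIntegrallyClosed ↥A ↔
      IsCompletelyIntegrallyClosedIn ↥A (FractionRing ↥A) := by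
  constructor
  · intro hA x ⟨M, hM, hxM⟩
    let L := AlgebraicClosure (FractionRing R)
    obtain ⟨a, ha, hM'⟩ :=
      FractionalIdeal.isFractional_of_fg (S := nonZeroDivisors A) hM
    have ha0 : (a : L) ≠ 0 := fun h ↦ nonZeroDivisors.ne_zero ha (Subtype.ext h)
    let φ : FractionRing A →ₐ[A] L :=
      IsFractionRing.liftAlgHom (g := Algebra.ofId A L) Subtype.val_injective
    let a' : integralClosure R L := ⟨a, hAplus a a.2⟩
    have ha' : a' ≠ 0 := fun h ↦ ha0 (congrArg Subtype.val h)
    obtain ⟨r, hr, c, hc⟩ := (Algebra.IsIntegral.isIntegral (R := R) a').isAlgebraic.exists_nonzero_dvd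
      (mem_nonZeroDivisors_of_ne_zero ha')
    have hc' : algebraMap R L r = (a : L) * (c : L) := congrArg Subtype.val hc
    have key : IsIntegral R (φ x) := by
      refine isIntegral_of_mem_almostIntSubring R (FractionRing R) L ⟨r, hr, fun n ↦ ?_⟩
      obtain ⟨b, hb⟩ := hM' _ (hxM n)
      have h3 : (b : L) = (a : L) * φ x ^ n := by
        have := congrArg φ hb
        rw [map_smul, map_pow, AlgHom.commutes] at this
        exact this
      rw [Algebra.smul_def, hc', mul_right_comm, ← h3]
      exact (hAplus b b.2).mul c.2
    have key2 : IsIntegral A (φ x) := by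
      obtain ⟨p, hp, hp0⟩ := key
      refine ⟨p.map ((algebraMap R L).codRestrict A fun r ↦ hRA ⟨r, rfl⟩), hp.map _, ?_⟩
      rw [Polynomial.eval₂_map]
      exact hp0
    rw [isIntegral_algHom_iff φ φ.toRingHom.injective] at key2
    exact IsIntegrallyClosed.isIntegral_iff.1 key2
  · intro h
    rw [isIntegrallyClosed_iff (FractionRing A)]
    intro x hx
    exact h x ⟨_, hx.fg_adjoin_singleton,
      fun n ↦ pow_mem (Algebra.self_mem_adjoin_singleton A x) n⟩
end

section
/- Let A be a domain that is integrally closed in its field of fractions Frac(A), and let Frac(A) ↪ B be an integral ring extension with B reduced. Let C be the integral closure of A in B. Then for every prime ideal 𝔭 of C, the localization C_𝔭 is a normal domain, i.e. an integral domain integrally closed in its field of fractions. -/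
theorem aux_regular (K B : Type*) [Field K] [CommRing B] [IsReduced B] [Algebra K B]
    [Algebra.IsIntegral K B] (b : B) : ∃ w : B, b * (b * w) = b := by
  have hfin : Module.Finite K (Algebra.adjoin K {b}) :=
    Module.Finite.iff_fg.mpr (Algebra.IsIntegral.isIntegral (R := K) b).fg_adjoin_singleton
  have : IsArtinianRing (Algebra.adjoin K {b}) := IsArtinianRing.of_finite K _
  obtain ⟨n, y, hy⟩ := IsArtinian.exists_pow_succ_smul_dvd
    (⟨b, Algebra.self_mem_adjoin_singleton K b⟩ : Algebra.adjoin K {b})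
    (1 : Algebra.adjoin K {b})
  have hy' : b ^ (n + 1) * (y : B) = b ^ n := by
    have := congrArg (Subtype.val) hy
    simpa using this
  refine ⟨y, ?_⟩
  have h : (b * (1 - b * y)) ^ (n + 1) = 0 := by
    have h0 : b ^ n * (1 - b * y) = 0 := by
      linear_combination -hy'
    rw [mul_pow, pow_succ, pow_succ]
    linear_combination b * (1 - b * (y : B)) ^ n * h0
  have h2 := pow_eq_zero_iff (n.succ_ne_zero) |>.mp h
  linear_combination -h2

theorem aux_main (C B : Type*) [CommRing C] [CommRing B] [Algebra C B]
    [IsIntegrallyClosedIn C B] (hreg : ∀ b : B, ∃ w : B, b * (b * w) = b)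
    (p : Ideal C) [p.IsPrime] :
    IsDomain (Localization.AtPrime p) ∧ IsIntegrallyClosed (Localization.AtPrime p) := by
  have hinj : Function.Injective (algebraMap C B) :=
    IsIntegralClosure.algebraMap_injective C C B
  let L := Localization (Algebra.algebraMapSubmonoid B p.primeCompl)
  have hinjL : Function.Injective (algebraMap (Localization.AtPrime p) L) :=
    localizationAlgebra_injective (M := p.primeCompl) (S := B)
      (Rₘ := Localization.AtPrime p) (Sₘ := L) hinj
  have : Nontrivial L := hinjL.nontrivial
  have hclosed : IsIntegrallyClosedIn (Localization.AtPrime p) L := by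
    refine isIntegrallyClosedIn_iff.mpr ⟨hinjL, fun {x} hx => ?_⟩
    obtain ⟨⟨b, _, s, hs, rfl⟩, e⟩ :=
      IsLocalization.surj (Algebra.algebraMapSubmonoid B p.primeCompl) x
    obtain ⟨⟨m, hm⟩, hmx⟩ :=
      IsIntegral.exists_multiple_integral_of_isLocalization p.primeCompl x hx
    simp only [← IsScalarTower.algebraMap_apply] at e
    simp only [Submonoid.smul_def, Algebra.smul_def] at hmx
    obtain ⟨t, ht, hti⟩ := IsLocalization.exists_isIntegral_smul_of_isIntegral_map (Sₘ := L)
      p.primeCompl (x := m • b) <| by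
        simp only [Algebra.smul_def, map_mul, ← IsScalarTower.algebraMap_apply, ← e, ← mul_assoc]
        exact hmx.mul isIntegral_algebraMap
    obtain ⟨c, hc⟩ := IsIntegrallyClosedIn.isIntegral_iff.mp hti
    have hu : t * m * s ∈ p.primeCompl := mul_mem (mul_mem ht hm) hs
    refine ⟨IsLocalization.mk' _ c ⟨_, hu⟩, ?_⟩
    have hunit : IsUnit (algebraMap C L (t * m * s)) := by
      rw [IsScalarTower.algebraMap_apply C (Localization.AtPrime p) L]
      exact (IsLocalization.map_units (Localization.AtPrime p)
        (⟨_, hu⟩ : p.primeCompl)).map _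
    apply hunit.mul_right_cancel
    have h1 := congrArg (algebraMap (Localization.AtPrime p) L)
      (IsLocalization.mk'_spec (Localization.AtPrime p) c (⟨_, hu⟩ : p.primeCompl))
    rw [map_mul, ← IsScalarTower.algebraMap_apply, ← IsScalarTower.algebraMap_apply] at h1
    rw [h1, IsScalarTower.algebraMap_apply C B L, hc]
    simp only [Algebra.smul_def, map_mul, ← IsScalarTower.algebraMap_apply, ← e]
    ring
  have hfield : IsField L := by
    refine ⟨exists_pair_ne L, mul_comm, fun {x} hx => ?_⟩
    obtain ⟨⟨b, s⟩, e⟩ :=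
      IsLocalization.surj (Algebra.algebraMapSubmonoid B p.primeCompl) x
    have hs := IsLocalization.map_units L s
    dsimp only at e
    obtain ⟨w, hw⟩ := hreg b
    have hid : IsIntegral C (b * w) := by
      refine ⟨Polynomial.X ^ 2 - Polynomial.X, ?_, ?_⟩
      · monicity!
      · simp
        linear_combination w * hw
    obtain ⟨f, hf⟩ := IsIntegrallyClosedIn.isIntegral_iff.mp hid
    have key : ∀ c : C, c ∉ p → IsUnit (algebraMap C L c) := fun c hc => by
      rw [IsScalarTower.algebraMap_apply C (Localization.AtPrime p) L]
      exact (IsLocalization.map_units (Localization.AtPrime p)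
        (⟨c, hc⟩ : p.primeCompl)).map _
    have hfL : algebraMap C L f = algebraMap B L b * algebraMap B L w := by
      rw [IsScalarTower.algebraMap_apply C B L, hf, map_mul]
    by_cases hfp : f ∈ p
    · exfalso
      have h1 : 1 - f ∉ p := fun h => (Ideal.ne_top_iff_one p).mp ‹p.IsPrime›.ne_top
        (by simpa using p.add_mem h hfp)
      have hb : algebraMap B L b = 0 := by
        apply (key _ h1).mul_left_cancel
        rw [map_sub, hfL, map_one]
        have := congrArg (algebraMap B L) hw
        simp only [map_mul] at this
        linear_combination -this
      rw [hb] at e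
      exact hx (hs.mul_left_eq_zero.mp e)
    · obtain ⟨v, hv⟩ := (key _ hfp).exists_right_inv
      refine ⟨algebraMap B L s * algebraMap B L w * v, ?_⟩
      rw [← hv, hfL, ← e]
      ring
  letI := hfield.toField
  have : FaithfulSMul (Localization.AtPrime p) L :=
    (faithfulSMul_iff_algebraMap_injective _ _).mpr hinjL
  exact ⟨hinjL.isDomain _, IsIntegrallyClosed.of_isIntegrallyClosedIn _ L⟩


/-- Let `A` be a domain integrally closed in its field of fractions, and let
`Frac A ↪ B` be an integral ring extension with `B` reduced.  Let `C` be the integral closure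
of `A` in `B`.  Then for every prime ideal `𝔭` of `C`, the localization `C_𝔭` is a normal
domain. -/
theorem localization_integralClosure_isNormalDomain
    (A : Type*) [CommRing A] [IsDomain A] [IsIntegrallyClosed A]
    (B : Type*) [CommRing B] [IsReduced B]
    [Algebra (FractionRing A) B] [Algebra.IsIntegral (FractionRing A) B]
    (hinj : Function.Injective (algebraMap (FractionRing A) B))
    [Algebra A B] [IsScalarTower A (FractionRing A) B]
    (𝔭 : Ideal ↥(integralClosure A B)) [𝔭.IsPrime] :
    IsDomain (Localization.AtPrime 𝔭) ∧ IsIntegrallyClosed (Localization.AtPrime 𝔭) := by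
  exact aux_main _ B (aux_regular (FractionRing A) B) 𝔭
end

section
/- Let A be a ring and let (a, b) be a regular sequence on A (a is a nonzero divisor on A and b is a nonzero divisor on A/aA). Let Â^a denote the a-adic completion of A, i.e. the inverse limit of the quotients A/a^nA. Then both a and b are nonzero divisors on Â^a. -/
theorem nzd_adic_aux {A : Type*} [CommRing A] (a c : A)
    (h : ∀ (n : ℕ) (y : A), a ^ (n + 1) ∣ c * y → a ^ n ∣ y) :
    algebraMap A (AdicCompletion (Ideal.span {a}) A) c
        ∈ nonZeroDivisors (AdicCompletion (Ideal.span {a}) A) := by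
  rw [mem_nonZeroDivisors_iff_right]
  intro x hx
  obtain ⟨f, rfl⟩ := AdicCompletion.mk_surjective _ _ x
  apply AdicCompletion.ext_evalₐ
  intro n
  have h1 := congrArg (AdicCompletion.evalₐ (Ideal.span {a}) (n + 1)) hx
  rw [map_mul, AlgHom.commutes, AdicCompletion.evalₐ_mk, map_zero,
    Ideal.Quotient.algebraMap_eq, ← map_mul, Ideal.Quotient.eq_zero_iff_mem,
    Ideal.span_singleton_pow, Ideal.mem_span_singleton, mul_comm] at h1
  have h2 := h n _ h1
  rw [AdicCompletion.evalₐ_mk, map_zero, AdicCompletion.Ideal.mk_eq_mk _ n.le_succ f |>.symm,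
    Ideal.Quotient.eq_zero_iff_mem, Ideal.span_singleton_pow, Ideal.mem_span_singleton]
  exact h2


/-- Let `A` be a ring and `(a, b)` a regular sequence on `A`.  Then `a` and
`b` are nonzero divisors on the `a`-adic completion of `A`. -/
theorem nonZeroDivisors_adicCompletion_of_regular_sequence
    (A : Type*) [CommRing A] (a b : A)
    (ha : a ∈ nonZeroDivisors A)
    (hb : ∀ x : A, b * x ∈ Ideal.span {a} → x ∈ Ideal.span {a}) :
    algebraMap A (AdicCompletion (Ideal.span {a}) A) a
        ∈ nonZeroDivisors (AdicCompletion (Ideal.span {a}) A) ∧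
    algebraMap A (AdicCompletion (Ideal.span {a}) A) b
        ∈ nonZeroDivisors (AdicCompletion (Ideal.span {a}) A) := by
  have haa : ∀ x y : A, a * x = a * y → x = y := fun x y h =>
    (mul_cancel_left_mem_nonZeroDivisors ha).1 h
  constructor
  · apply nzd_adic_aux
    rintro n y ⟨c, hc⟩
    exact ⟨c, haa _ _ (by rw [hc]; ring)⟩
  · apply nzd_adic_aux
    have key : ∀ (n : ℕ) (y : A), a ^ n ∣ b * y → a ^ n ∣ y := by
      intro n
      induction n with
      | zero => intro y _; simp
      | succ n ih =>
        rintro y ⟨c, hc⟩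
        obtain ⟨z, rfl⟩ := Ideal.mem_span_singleton.1 (hb y
          (Ideal.mem_span_singleton.2 ⟨a ^ n * c, by rw [hc]; ring⟩))
        obtain ⟨d, rfl⟩ := ih z ⟨c, haa _ _ (by linear_combination hc)⟩
        exact ⟨d, by ring⟩
    exact fun n y h => key n y ((pow_dvd_pow a n.le_succ).trans h)
end

section
/- Let R be a Noetherian domain with a proper ideal I, let T be a normal ring that is a torsion-free integral extension of R, and fix a prime p. Assume π ∈ I is a nonzero element such that T admits a compatible system of p-power roots π^{1/p^n} ∈ T of π. Then T/IT is not (π)^{1/p^∞}-almost zero; that is, there exists n > 0 such that π^{1/p^n} ∉ IT. -/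
theorem aux_val {R L : Type*} [CommRing R] [IsDomain R] [IsNoetherianRing R] [Field L] [Algebra R L]
    (hinj : Function.Injective (algebraMap R L)) (I : Ideal R) (hI : I ≠ ⊤) (hI0 : I ≠ ⊥) :
    ∃ (a : R) (S : Subalgebra R L), a ∈ I ∧ a ≠ 0 ∧ IsNoetherianRing S ∧
      ¬ IsUnit (algebraMap R S a) ∧ ∀ i ∈ I, algebraMap R L i / algebraMap R L a ∈ S := by
  classical
  let A : Subring L := (algebraMap R L).range
  let e : R ≃+* A := RingEquiv.ofBijective (algebraMap R L).rangeRestrict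
    ⟨fun x y h => hinj (congrArg Subtype.val h), (algebraMap R L).rangeRestrict_surjective⟩
  have hJ : I.map (e : R →+* A) ≠ ⊤ := by
    intro h
    apply hI
    have := Ideal.comap_map_of_bijective (e : R →+* A) e.bijective (I := I)
    rw [← this, h, Ideal.comap_top]
  obtain ⟨B, hAB, hB⟩ := Ideal.image_subset_nonunits_valuationSubring _ hJ
  have hRB : ∀ x : R, algebraMap R L x ∈ B := fun x => hAB ⟨x, rfl⟩
  have hIB : ∀ i ∈ I, algebraMap R L i ∈ B.nonunits := fun i hi =>
    hB ⟨e i, Ideal.mem_map_of_mem _ hi, rfl⟩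
  obtain ⟨s, hs⟩ := (isNoetherianRing_iff_ideal_fg R).1 inferInstance I
  have hsne : s.Nonempty := by
    rw [Finset.nonempty_iff_ne_empty]
    rintro rfl
    apply hI0
    rw [← hs]; simp
  obtain ⟨a, has, hmax⟩ := s.exists_max_image (fun i => B.valuation (algebraMap R L i)) hsne
  have hsI : ∀ i ∈ s, i ∈ I := fun i hi => hs ▸ Ideal.subset_span hi
  have ha0 : a ≠ 0 := by
    rintro rfl
    apply hI0
    rw [← hs, Ideal.span_eq_bot]
    intro i hi
    have := hmax i hi
    simpa [map_eq_zero_iff _ hinj] using this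
  have haL : algebraMap R L a ≠ 0 := by
    rwa [Ne, map_eq_zero_iff _ hinj]
  let X : Finset L := s.image (fun i => algebraMap R L i / algebraMap R L a)
  let S := Algebra.adjoin R (X : Set L)
  have hSB : ∀ x ∈ S, x ∈ B := by
    intro x hx
    induction hx using Algebra.adjoin_induction with
    | mem x hx =>
      obtain ⟨i, hi, rfl⟩ := Finset.mem_image.1 (Finset.mem_coe.1 hx)
      rw [← B.valuation_le_one_iff, map_div₀]
      exact div_le_one_of_le₀ (hmax i hi) zero_le
    | algebraMap r => exact hRB r
    | add x y _ _ hx hy => exact add_mem hx hy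
    | mul x y _ _ hx hy => exact mul_mem hx hy
  refine ⟨a, S, hsI a has, ha0, isNoetherianRing_of_fg (Subalgebra.fg_adjoin_finset X), ?_, ?_⟩
  · intro hu
    obtain ⟨b, hb⟩ := hu.exists_right_inv
    have hb' : algebraMap R L a * (b : L) = 1 := congrArg Subtype.val hb
    have h1 := hIB a (hsI a has)
    rw [B.mem_nonunits_iff] at h1
    have h2 := (B.valuation_le_one_iff _).2 (hSB b b.2)
    have h3 : B.valuation (algebraMap R L a) * B.valuation (b : L) = 1 := by
      rw [← map_mul, hb', map_one]
    have h4 := mul_lt_one_of_lt_of_le h1 h2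
    exact h4.ne h3
  · intro i hi
    rw [← hs] at hi
    induction hi using Submodule.span_induction with
    | mem x hx => exact Algebra.subset_adjoin (Finset.mem_coe.2 (Finset.mem_image_of_mem _ hx))
    | zero => simp
    | add x y _ _ hx hy => rw [map_add, add_div]; exact add_mem hx hy
    | smul c x _ hx =>
      rw [smul_eq_mul, map_mul, mul_div_assoc]
      exact mul_mem (S.algebraMap_mem c) hx

theorem aux_ht {S : Type*} [CommRing S] [IsDomain S] [IsNoetherianRing S] (a x : S)
    (ha : ¬ IsUnit a) (hx : x ≠ 0) :
    ∃ (P : Ideal S), P.IsPrime ∧ a ∈ P ∧ ∃ (c : ℕ) (s b : S), s ∉ P ∧ a ^ c * s = x * b := by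
  have hne : Ideal.span {a} ≠ ⊤ := by rwa [Ne, Ideal.span_singleton_eq_top]
  obtain ⟨P, hP⟩ := Ideal.nonempty_minimalPrimes hne
  have hPp : P.IsPrime := hP.1.1
  have haP : a ∈ P := hP.1.2 (Ideal.mem_span_singleton_self a)
  refine ⟨P, hPp, haP, ?_⟩
  by_contra! hcon
  have hdisj : Disjoint (Ideal.span {x} : Set S) (Submonoid.powers a ⊔ P.primeCompl : Submonoid S) := by
    rw [Set.disjoint_left]
    intro y hy hy'
    obtain ⟨b, rfl⟩ := Ideal.mem_span_singleton.1 hy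
    obtain ⟨_, ⟨c, rfl⟩, s, hs, h⟩ := Submonoid.mem_sup.1 hy'
    exact hcon c s b hs h
  obtain ⟨q, hq, hxq, hqd⟩ := Ideal.exists_le_prime_disjoint _ _ hdisj
  rw [Set.disjoint_left] at hqd
  have hqP : q < P := by
    refine lt_of_le_of_ne (fun y hy => ?_) ?_
    · by_contra h
      exact hqd hy (Submonoid.mem_sup_right (show y ∈ P.primeCompl from h))
    · rintro rfl
      exact hqd haP (Submonoid.mem_sup_left (Submonoid.mem_powers a))
  have hh : P.height ≤ 1 := Ideal.height_le_one_of_isPrincipal_of_mem_minimalPrimes _ P hP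
  have hq0 : q.height < (1 : ℕ) :=
    (Ideal.height_le_iff (n := 1)).1 (by exact_mod_cast hh) q hq hqP
  have hqbot : q = ⊥ := by
    rw [← Ideal.height_eq_zero_iff_eq_bot]
    rw [Nat.cast_one, ENat.lt_one_iff_eq_zero] at hq0
    exact hq0
  apply hx
  have := hxq (Ideal.mem_span_singleton_self x)
  simp_all

theorem aux_int_s17 {S L : Type*} [CommRing S] [Field L] [Algebra S L]
    (hinj : Function.Injective (algebraMap S L)) (a s : S) (ha : a ≠ 0)
    (h : IsIntegral S (algebraMap S L s / algebraMap S L a)) : ∃ m, a ∣ s ^ m := by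
  obtain ⟨f, hf, hf0⟩ := h
  have haL : algebraMap S L a ≠ 0 := by rwa [Ne, map_eq_zero_iff _ hinj]
  refine ⟨f.natDegree, ?_⟩
  have h1 : (f.scaleRoots a).eval₂ (algebraMap S L) (algebraMap S L a * (algebraMap S L s / algebraMap S L a)) = 0 :=
    Polynomial.scaleRoots_eval₂_eq_zero _ hf0
  rw [mul_div_cancel₀ _ haL, Polynomial.eval₂_at_apply, map_eq_zero_iff _ hinj,
    Polynomial.eval_eq_sum_range, Polynomial.natDegree_scaleRoots, Finset.sum_range_succ] at h1
  have h2 : (f.scaleRoots a).coeff f.natDegree = 1 := by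
    rw [Polynomial.coeff_scaleRoots_natDegree, hf.leadingCoeff]
  rw [h2, one_mul, add_comm] at h1
  rw [eq_neg_of_add_eq_zero_left h1, dvd_neg]
  refine Finset.dvd_sum fun i hi => ?_
  rw [Polynomial.coeff_scaleRoots]
  have : f.natDegree - i ≠ 0 := by have := Finset.mem_range.1 hi; omega
  exact ((dvd_pow_self a this).mul_left _).mul_right _

theorem aux_core {R L : Type*} [CommRing R] [IsDomain R] [IsNoetherianRing R] [Field L] [Algebra R L]
    (hinj : Function.Injective (algebraMap R L)) (I : Ideal R) (hI : I ≠ ⊤)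
    (T : Type*) [CommRing T] [Algebra R T] [Algebra.IsIntegral R T] (φ : T →ₐ[R] L)
    (p : ℕ) (hp : p.Prime)
    (π : R) (hπ0 : π ≠ 0) (hπI : π ∈ I)
    (r : ℕ → T) (hr0 : r 0 = algebraMap R T π) (hr : ∀ n, r (n + 1) ^ p = r n) :
    ∃ n : ℕ, 0 < n ∧ r n ∉ I.map (algebraMap R T) := by
  by_contra! hcon
  have hI0 : I ≠ ⊥ := by rintro rfl; exact hπ0 hπI
  obtain ⟨a, S, haI, ha0, hN, hu, hS⟩ := aux_val hinj I hI hI0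
  have haL : algebraMap R L a ≠ 0 := by rwa [Ne, map_eq_zero_iff _ hinj]
  have hSinj : Function.Injective (algebraMap S L) := Subtype.val_injective
  have hRS : Function.Injective (algebraMap R S) := fun x y h => hinj (congrArg Subtype.val h)
  obtain ⟨P, hP, haP, c, s, b, hs, hsb⟩ := aux_ht (algebraMap R S a) (algebraMap R S π) hu
    (by rwa [Ne, map_eq_zero_iff _ hRS])
  have hTint : ∀ t : T, IsIntegral S (φ t) := fun t =>
    ((Algebra.IsIntegral.isIntegral (R := R) t).map φ).tower_top
  have hIT : ∀ t ∈ I.map (algebraMap R T), IsIntegral S (φ t / algebraMap R L a) := by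
    intro t ht
    induction ht using Submodule.span_induction with
    | mem x hx =>
      obtain ⟨i, hi, rfl⟩ := hx
      rw [φ.commutes]
      exact isIntegral_algebraMap (x := (⟨_, hS i hi⟩ : S))
    | zero => simpa using isIntegral_zero
    | add x y _ _ hx hy => rw [map_add, add_div]; exact hx.add hy
    | smul d x _ hx =>
      rw [smul_eq_mul, map_mul, mul_div_assoc]
      exact (hTint d).mul hx
  have hpow : ∀ n, r n ^ p ^ n = algebraMap R T π := by
    intro n
    induction n with
    | zero => simpa using hr0
    | succ n ih => rw [pow_succ', pow_mul, hr, ih]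
  have hk : c + 1 ≤ p ^ (c + 1) := (Nat.lt_pow_self hp.one_lt).le
  have h1 : IsIntegral S (algebraMap R L π / algebraMap R L a ^ p ^ (c + 1)) := by
    have := (hIT _ (hcon (c + 1) (Nat.succ_pos c))).pow (p ^ (c + 1))
    rwa [div_pow, ← map_pow, hpow, φ.commutes] at this
  obtain ⟨d, hd⟩ := Nat.exists_eq_add_of_le hk
  have haint : IsIntegral S (algebraMap R L a) :=
    isIntegral_algebraMap (x := algebraMap R S a)
  have hbint : IsIntegral S (b : L) := isIntegral_algebraMap (x := b)
  have hsbL : algebraMap R L a ^ c * (s : L) = algebraMap R L π * b := congrArg Subtype.val hsb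
  have h2 : IsIntegral S (algebraMap S L s / algebraMap S L (algebraMap R S a)) := by
    have h3 := (h1.mul (haint.pow d)).mul hbint
    have h4 : (s : L) / algebraMap R L a = algebraMap R L π / algebraMap R L a ^ p ^ (c + 1) *
        algebraMap R L a ^ d * b := by
      rw [hd]
      field_simp
      linear_combination (algebraMap R L a) * (algebraMap R L a) ^ d * hsbL
    rw [← h4] at h3
    exact h3
  obtain ⟨m, hm⟩ := aux_int_s17 hSinj _ s (by rwa [Ne, map_eq_zero_iff _ hRS]) h2
  exact hs (hP.mem_of_pow_mem m (P.mem_of_dvd hm haP))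


/-- Let `R` be a Noetherian domain with a proper ideal `I`, let `T` be a
normal ring that is a torsion-free integral extension of `R`, and fix a prime `p`.  If
`π ∈ I` is nonzero and `T` admits a compatible system of `p`-power roots of `π`, then `T/IT`
is not `(π)^{1/p^∞}`-almost zero; that is, there exists `n > 0` with `π^{1/p^n} ∉ IT`. -/
theorem exists_pPowRoot_not_mem_map_of_proper_ideal
    (R : Type*) [CommRing R] [IsDomain R] [IsNoetherianRing R]
    (I : Ideal R) (hI : I ≠ ⊤)
    (T : Type*) [CommRing T] [Algebra R T]
    (hinj : Function.Injective (algebraMap R T))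
    [Algebra.IsIntegral R T]
    (htf : ∀ r : R, r ≠ 0 → ∀ x : T, algebraMap R T r * x = 0 → x = 0)
    (hnormal : ∀ (P : Ideal T), ∀ [P.IsPrime],
        IsDomain (Localization.AtPrime P) ∧ IsIntegrallyClosed (Localization.AtPrime P))
    (p : ℕ) (hp : p.Prime)
    (π : R) (hπ0 : π ≠ 0) (hπI : π ∈ I)
    (r : ℕ → T) (hr0 : r 0 = algebraMap R T π) (hr : ∀ n, r (n + 1) ^ p = r n) :
    ∃ n : ℕ, 0 < n ∧ r n ∉ I.map (algebraMap R T) := by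
  obtain ⟨Q, -, hQ, hQ0⟩ := Ideal.exists_ideal_over_prime_of_isIntegral (⊥ : Ideal R) (⊥ : Ideal T)
    (by rw [← RingHom.ker_eq_comap_bot, (RingHom.injective_iff_ker_eq_bot _).1 hinj])
  have hinj2 : Function.Injective (algebraMap R (T ⧸ Q)) := by
    rw [injective_iff_map_eq_zero]
    intro x hx
    have h1 : algebraMap R T x ∈ Q := Ideal.Quotient.eq_zero_iff_mem.1 hx
    have h2 : x ∈ Q.comap (algebraMap R T) := h1
    rw [hQ0] at h2
    exact h2
  let L := FractionRing (T ⧸ Q)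
  let φ : T →ₐ[R] L := (IsScalarTower.toAlgHom R (T ⧸ Q) L).comp (Ideal.Quotient.mkₐ R Q)
  have hinj3 : Function.Injective (algebraMap R L) := by
    rw [IsScalarTower.algebraMap_eq R (T ⧸ Q) L]
    exact (IsFractionRing.injective (T ⧸ Q) L).comp hinj2
  exact aux_core hinj3 I hI T φ p hp π hπ0 hπI r hr0 hr
end

section
/- Let A ⊆ B be an integral ring extension and let I ⊆ A be an ideal. Then: (1) the induced ring map (1+I)^{-1}A → (1+IB)^{-1}B between the Zariskizations is integral; (2) if {A_λ}_{λ∈Λ} is the filtered system of all module-finite A-subalgebras of B, then the canonical ring map colim_λ (1+IA_λ)^{-1}A_λ → (1+IB)^{-1}B is an isomorphism. -/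
/-- The multiplicative set `1 + I` associated to an ideal `I`. -/
def oneAddSubmonoid {A : Type*} [CommRing A] (I : Ideal A) : Submonoid A where
  carrier := {x | ∃ i ∈ I, x = 1 + i}
  one_mem' := ⟨0, I.zero_mem, by ring⟩
  mul_mem' := by
    rintro x y ⟨i, hi, rfl⟩ ⟨j, hj, rfl⟩
    exact ⟨i + j + i * j, I.add_mem (I.add_mem hi hj) (Ideal.mul_mem_left I i hj), by ring⟩

/-- The `I`-adic Zariskization `(1+I)⁻¹A` of a ring `A`. -/
abbrev Zariskization {A : Type*} [CommRing A] (I : Ideal A) : Type _ :=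
  Localization (oneAddSubmonoid I)

lemma oneAddSubmonoid_mono {A : Type*} [CommRing A] {I J : Ideal A} (h : I ≤ J) :
    oneAddSubmonoid I ≤ oneAddSubmonoid J := by
  rintro x ⟨i, hi, rfl⟩
  exact ⟨i, h hi, rfl⟩

lemma oneAddSubmonoid_le_comap {A B : Type*} [CommRing A] [CommRing B] (φ : A →+* B)
    (I : Ideal A) :
    oneAddSubmonoid I ≤ Submonoid.comap φ (oneAddSubmonoid (I.map φ)) := by
  rintro x ⟨i, hi, rfl⟩
  exact ⟨φ i, Ideal.mem_map_of_mem φ hi, by rw [map_add, map_one]⟩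

section

variable {A B : Type*} [CommRing A] [CommRing B] [Algebra A B] (I : Ideal A)

lemma zarTransition_le {S S' : Subalgebra A B} (h : S ≤ S') :
    oneAddSubmonoid (I.map (algebraMap A ↥S)) ≤
      Submonoid.comap (Subalgebra.inclusion h).toRingHom
        (oneAddSubmonoid (I.map (algebraMap A ↥S'))) := by
  intro x hx
  have h1 := oneAddSubmonoid_le_comap (Subalgebra.inclusion h).toRingHom
    (I.map (algebraMap A ↥S)) hx
  rw [Submonoid.mem_comap] at h1 ⊢
  refine oneAddSubmonoid_mono ?_ h1
  rw [Ideal.map_map]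
  exact le_of_eq (congrArg (fun φ => Ideal.map φ I) (RingHom.ext fun a => Subtype.ext rfl))

lemma zarToAmbient_le (S : Subalgebra A B) :
    oneAddSubmonoid (I.map (algebraMap A ↥S)) ≤
      Submonoid.comap S.val.toRingHom (oneAddSubmonoid (I.map (algebraMap A B))) := by
  intro x hx
  have h1 := oneAddSubmonoid_le_comap S.val.toRingHom (I.map (algebraMap A ↥S)) hx
  rw [Submonoid.mem_comap] at h1 ⊢
  refine oneAddSubmonoid_mono ?_ h1
  rw [Ideal.map_map]
  exact le_of_eq (congrArg (fun φ => Ideal.map φ I) (RingHom.ext fun a => rfl))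

/-- The transition homomorphism between the Zariskizations of two subalgebras. -/
noncomputable def zarTransition {S S' : Subalgebra A B} (h : S ≤ S') :
    Zariskization (I.map (algebraMap A ↥S)) →+* Zariskization (I.map (algebraMap A ↥S')) :=
  IsLocalization.map (Zariskization (I.map (algebraMap A ↥S')))
    (Subalgebra.inclusion h).toRingHom (zarTransition_le I h)

/-- The canonical homomorphism from the Zariskization of a subalgebra of `B` to the
Zariskization of `B`. -/
noncomputable def zarToAmbient (S : Subalgebra A B) :
    Zariskization (I.map (algebraMap A ↥S)) →+* Zariskization (I.map (algebraMap A B)) :=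
  IsLocalization.map (Zariskization (I.map (algebraMap A B)))
    S.val.toRingHom (zarToAmbient_le I S)

/-- The index type of all module-finite `A`-subalgebras of `B`. -/
abbrev FinSubalg (A B : Type*) [CommRing A] [CommRing B] [Algebra A B] :=
  {S : Subalgebra A B // (Subalgebra.toSubmodule S).FG}

lemma zar_compat {i j : FinSubalg A B} (hij : i ≤ j)
    (x : Zariskization (I.map (algebraMap A ↥i.1))) :
    zarToAmbient I j.1 (zarTransition I hij x) = zarToAmbient I i.1 x := by
  have : (zarToAmbient I j.1).comp (zarTransition I hij) = zarToAmbient I i.1 := by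
    apply IsLocalization.ringHom_ext (oneAddSubmonoid (I.map (algebraMap A ↥i.1)))
    ext a
    simp [zarToAmbient, zarTransition, IsLocalization.map_eq]
  exact DFunLike.congr_fun this x

/-- The canonical homomorphism from the direct limit of the Zariskizations of the
module-finite subalgebras of `B` to the Zariskization of `B`. -/
noncomputable def zarCanonicalMap :
    Ring.DirectLimit (fun S : FinSubalg A B => Zariskization (I.map (algebraMap A ↥S.1)))
        (fun _ _ h => zarTransition I h) →+*
      Zariskization (I.map (algebraMap A B)) :=
  Ring.DirectLimit.lift _ _ _ (fun S => zarToAmbient I S.1) (fun _ _ hij x => zar_compat I hij x)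

end

lemma zar_key {A B : Type*} [CommRing A] [CommRing B] [Algebra A B] [Algebra.IsIntegral A B]
    (I : Ideal A) {s : B} (hs : s ∈ oneAddSubmonoid (I.map (algebraMap A B))) :
    ∃ t : B, ∃ m ∈ oneAddSubmonoid I, s * t = algebraMap A B m := by
  obtain ⟨j, hj, rfl⟩ := hs
  obtain ⟨p, hp, h0, hc⟩ := Polynomial.exists_monic_aeval_eq_zero_forall_mem_of_mem_map hj
  obtain ⟨t, ht⟩ := Polynomial.sub_dvd_eval_sub j (-1) (p.map (algebraMap A B))
  have e1 : (p.map (algebraMap A B)).eval j = 0 := by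
    rw [Polynomial.eval_map_algebraMap]; exact h0
  have e2 : (p.map (algebraMap A B)).eval (-1) = algebraMap A B (p.eval (-1)) := by
    have := Polynomial.eval_map_apply (algebraMap A B) (p := p) (-1)
    simpa using this
  have e3 : ∃ i ∈ I, p.eval (-1) = i + (-1) ^ p.natDegree := by
    refine ⟨∑ k ∈ Finset.range p.natDegree, p.coeff k * (-1) ^ k, ?_, ?_⟩
    · refine Ideal.sum_mem _ fun k hk => Ideal.mul_mem_right _ _ (hc k ?_)
      exact (Finset.mem_range.1 hk).ne
    · rw [Polynomial.eval_eq_sum_range, Finset.sum_range_succ, hp.coeff_natDegree, one_mul]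
  obtain ⟨i, hi, e3⟩ := e3
  have hsq : ((-1 : A) ^ p.natDegree) * (-1) ^ p.natDegree = 1 := by
    rw [← mul_pow]; simp
  refine ⟨-t * algebraMap A B ((-1) ^ p.natDegree), 1 + i * (-1) ^ p.natDegree,
    ⟨_, Ideal.mul_mem_right _ _ hi, rfl⟩, ?_⟩
  have e4 : (1 + j) * t = - algebraMap A B (p.eval (-1)) := by
    rw [e1, e2] at ht
    linear_combination -ht
  have e5 : 1 + i * (-1) ^ p.natDegree = p.eval (-1) * (-1) ^ p.natDegree := by
    rw [e3, add_mul, hsq, add_comm]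
  rw [e5, map_mul]
  linear_combination (-algebraMap A B ((-1) ^ p.natDegree)) * e4

lemma zar_mk_eq {A B : Type*} [CommRing A] [CommRing B] [Algebra A B] [Algebra.IsIntegral A B]
    (I : Ideal A) (z : Zariskization (I.map (algebraMap A B))) :
    ∃ b : B, ∃ m : A, ∃ hm : m ∈ oneAddSubmonoid I,
      z = IsLocalization.mk' _ b
        (⟨algebraMap A B m, oneAddSubmonoid_le_comap (algebraMap A B) I hm⟩ :
          oneAddSubmonoid (I.map (algebraMap A B))) := by
  obtain ⟨b, s, rfl⟩ := IsLocalization.exists_mk'_eq (oneAddSubmonoid (I.map (algebraMap A B))) z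
  obtain ⟨t, m, hm, h⟩ := zar_key I s.2
  refine ⟨b * t, m, hm, ?_⟩
  apply IsLocalization.mk'_eq_of_eq
  simp only [← h]
  ring

lemma zarToAmbient_injective {A B : Type*} [CommRing A] [CommRing B] [Algebra A B]
    [Algebra.IsIntegral A B] (I : Ideal A) (S : Subalgebra A B) :
    Function.Injective (zarToAmbient I S) := by
  rw [injective_iff_map_eq_zero]
  intro z hz
  obtain ⟨x, s, rfl⟩ :=
    IsLocalization.exists_mk'_eq (oneAddSubmonoid (I.map (algebraMap A S))) z
  rw [zarToAmbient, IsLocalization.map_mk', IsLocalization.mk'_eq_zero_iff] at hz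
  obtain ⟨u, hu⟩ := hz
  obtain ⟨t, m, hm, h⟩ := zar_key I u.2
  rw [IsLocalization.mk'_eq_zero_iff]
  refine ⟨⟨algebraMap A S m, oneAddSubmonoid_le_comap (algebraMap A S) I hm⟩, ?_⟩
  apply Subtype.ext
  change algebraMap A B m * (x : B) = 0
  change (u : B) * (x : B) = 0 at hu
  rw [← h]
  linear_combination t * hu

/-- Let `A ⊆ B` be an integral ring extension and `I ⊆ A` an ideal.  Then
(1) the induced map `(1+I)⁻¹A → (1+IB)⁻¹B` of Zariskizations is integral, and
(2) the canonical map from the direct limit of the Zariskizations of the module-finite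
`A`-subalgebras of `B` to `(1+IB)⁻¹B` is bijective. -/
theorem zariskization_integral_and_colimit
    (A B : Type*) [CommRing A] [CommRing B] [Algebra A B]
    (hinj : Function.Injective (algebraMap A B))
    [Algebra.IsIntegral A B] (I : Ideal A) :
    -- (1)
    (IsLocalization.map (Zariskization (I.map (algebraMap A B))) (algebraMap A B)
        (oneAddSubmonoid_le_comap (algebraMap A B) I) :
          Zariskization I →+* Zariskization (I.map (algebraMap A B))).IsIntegral ∧
    -- (2)
    Function.Bijective (zarCanonicalMap (A := A) (B := B) I) := by
  refine ⟨?_, ?_, ?_⟩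
  · intro z
    obtain ⟨b, m, hm, rfl⟩ := zar_mk_eq I z
    set f : Zariskization I →+* Zariskization (I.map (algebraMap A B)) :=
      IsLocalization.map (Zariskization (I.map (algebraMap A B))) (algebraMap A B)
        (oneAddSubmonoid_le_comap (algebraMap A B) I) with hf
    have hb : f.IsIntegralElem (algebraMap B (Zariskization (I.map (algebraMap A B))) b) := by
      obtain ⟨p, hp, h0⟩ := Algebra.IsIntegral.isIntegral (R := A) b
      refine ⟨p.map (algebraMap A (Zariskization I)), hp.map _, ?_⟩
      have hc : f.comp (algebraMap A (Zariskization I)) =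
          (algebraMap B (Zariskization (I.map (algebraMap A B)))).comp (algebraMap A B) :=
        IsLocalization.map_comp _
      rw [Polynomial.eval₂_map, hc, ← Polynomial.hom_eval₂, h0, map_zero]
    have hi : f.IsIntegralElem (f (IsLocalization.mk' _ 1 (⟨m, hm⟩ : oneAddSubmonoid I))) :=
      RingHom.isIntegralElem_map f
    have := hb.mul f hi
    rw [hf, IsLocalization.map_mk', map_one, ← IsLocalization.mk'_eq_mul_mk'_one] at this
    exact this
  · have : Nonempty (FinSubalg A B) := ⟨⟨⊥, Subalgebra.fg_bot_toSubmodule⟩⟩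
    have : IsDirectedOrder (FinSubalg A B) := ⟨fun S T =>
      ⟨⟨S.1 ⊔ T.1, by rw [← Subalgebra.mul_toSubmodule]; exact S.2.mul T.2⟩,
        (le_sup_left : S.1 ≤ S.1 ⊔ T.1), (le_sup_right : T.1 ≤ S.1 ⊔ T.1)⟩⟩
    exact Ring.DirectLimit.lift_injective _ _ _ fun S => zarToAmbient_injective I S.1
  · intro z
    obtain ⟨b, m, hm, rfl⟩ := zar_mk_eq I z
    let S : FinSubalg A B := ⟨Algebra.adjoin A {b},
      (Algebra.IsIntegral.isIntegral (R := A) b).fg_adjoin_singleton⟩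
    refine ⟨Ring.DirectLimit.of _ _ S (IsLocalization.mk' _
      (⟨b, Algebra.self_mem_adjoin_singleton A b⟩ : S.1)
      (⟨algebraMap A S.1 m, oneAddSubmonoid_le_comap (algebraMap A S.1) I hm⟩ :
        oneAddSubmonoid (I.map (algebraMap A S.1)))), ?_⟩
    rw [zarCanonicalMap, Ring.DirectLimit.lift_of, zarToAmbient, IsLocalization.map_mk']
    rfl
end
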